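/- Let K be a commutative semiring with 0 ≠ 1 that is locally finite, and Δ a finite alphabet. A nested word series S : NW(Δ) → K is regular if and only if S is MSO(K)-definable. -/

import Mathlib

/-! ### Nested words and weighted nested word automata -/

/-- A nesting relation of width `n` (positions `1,…,n`). -/
def IsNestingRel (n : ℕ) (ν : ℕ → ℕ → Prop) : Prop :=
  (∀ i j, ν i j → 1 ≤ i ∧ i < j ∧ j ≤ n) ∧
  (∀ i j j', ν i j → ν i j' → j = j') ∧
  (∀ i i' j, ν i j → ν i' j → i = i') ∧
  (∀ i j i' j', ν i j → ν i' j' → i < i' → j < i' ∨ j' < j)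

/-- A nested word over `Δ`: a nonempty word together with a nesting relation. -/
structure NestedWord (Δ : Type) : Type where
  word : List Δ
  ne : word ≠ []
  rel : ℕ → ℕ → Prop
  isNest : IsNestingRel word.length rel

namespace NestedWord

variable {Δ : Type} (nw : NestedWord Δ)

/-- The length of the nested word. -/
def len : ℕ := nw.word.length

/-- The letter at (1-based) position `j`. -/
def letter (j : ℕ) : Δ := nw.word.getD (j - 1) (nw.word.head nw.ne)

def IsCall (j : ℕ) : Prop := ∃ i, nw.rel j i
def IsReturn (j : ℕ) : Prop := ∃ i, nw.rel i j
def IsInternal (j : ℕ) : Prop :=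
  1 ≤ j ∧ j ≤ nw.len ∧ ¬ nw.IsCall j ∧ ¬ nw.IsReturn j

/-- The nesting depth of position `k`: the number of arches open at `k`. -/
noncomputable def depth (k : ℕ) : ℕ :=
  Set.ncard {p : ℕ × ℕ | nw.rel p.1 p.2 ∧ p.1 ≤ k ∧ k ≤ p.2}

end NestedWord

/-- Clamp a function on `Fin (n+1)` to a function on `ℕ`. -/
def clampFun {Q : Type} {n : ℕ} (r : Fin (n + 1) → Q) : ℕ → Q :=
  fun k => r ⟨min k n, Nat.lt_succ_of_le (min_le_right _ _)⟩

/-- A weighted nested word automaton over the commutative semiring `K`. -/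
structure WNWA (K Δ : Type) [CommSemiring K] : Type 1 where
  Q : Type
  [fintQ : Fintype Q]
  ι : Q → K
  δcall : Q → Δ → Q → K
  δint : Q → Δ → Q → K
  δret : Q → Q → Δ → Q → K
  κ : Q → K

attribute [instance] WNWA.fintQ

namespace WNWA

variable {K Δ : Type} [CommSemiring K]

open Classical in
/-- The weight contributed by position `j` in a run `ρ`. -/
noncomputable def posWeight (A : WNWA K Δ) (nw : NestedWord Δ) (ρ : ℕ → A.Q) (j : ℕ) : K :=
  if nw.IsCall j then A.δcall (ρ (j - 1)) (nw.letter j) (ρ j)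
  else if h : nw.IsReturn j then
    A.δret (ρ (j - 1)) (ρ (h.choose - 1)) (nw.letter j) (ρ j)
  else A.δint (ρ (j - 1)) (nw.letter j) (ρ j)

/-- The weight of a run. -/
noncomputable def runWeight (A : WNWA K Δ) (nw : NestedWord Δ) (ρ : ℕ → A.Q) : K :=
  ∏ j ∈ Finset.Icc 1 nw.len, A.posWeight nw ρ j

/-- The behavior of a weighted nested word automaton. -/
noncomputable def behavior (A : WNWA K Δ) (nw : NestedWord Δ) : K :=
  ∑ r : Fin (nw.len + 1) → A.Q,
    A.ι (r 0) * A.runWeight nw (clampFun r) * A.κ (r (Fin.last _))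

end WNWA

/-- A nested word series is regular if it is the behavior of some WNWA. -/
def NWRegular {K Δ : Type} [CommSemiring K] (S : NestedWord Δ → K) : Prop :=
  ∃ A : WNWA K Δ, ∀ nw, A.behavior nw = S nw
/-! ### Weighted MSO logic over nested words -/

/-- Weighted MSO formulae over nested words: constants from `K`, atomic formulae
and their negations, closed under `∨`, `∧`, and the four quantifiers. -/
inductive WMSO (K Δ : Type) : Type where
  | const : K → WMSO K Δ
  | eqv : ℕ → ℕ → WMSO K Δ
  | lab : Δ → ℕ → WMSO K Δ
  | lev : ℕ → ℕ → WMSO K Δ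
  | nuv : ℕ → ℕ → WMSO K Δ
  | mem : ℕ → ℕ → WMSO K Δ
  | neq : ℕ → ℕ → WMSO K Δ
  | nlab : Δ → ℕ → WMSO K Δ
  | nle : ℕ → ℕ → WMSO K Δ
  | nnu : ℕ → ℕ → WMSO K Δ
  | nmem : ℕ → ℕ → WMSO K Δ
  | or : WMSO K Δ → WMSO K Δ → WMSO K Δ
  | and : WMSO K Δ → WMSO K Δ → WMSO K Δ
  | exF : ℕ → WMSO K Δ → WMSO K Δ
  | exS : ℕ → WMSO K Δ → WMSO K Δ
  | alF : ℕ → WMSO K Δ → WMSO K Δ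
  | alS : ℕ → WMSO K Δ → WMSO K Δ

namespace WMSO

variable {K Δ : Type} [CommSemiring K]

open Classical in
/-- Weighted semantics: `∨ ↦ +`, `∧ ↦ ·`, `∃ ↦ Σ`, `∀ ↦ Π`. -/
noncomputable def sem (nw : NestedWord Δ) :
    WMSO K Δ → (ℕ → ℕ) → (ℕ → Finset ℕ) → K
  | .const k, _, _ => k
  | .eqv x y, γ1, _ => if γ1 x = γ1 y then 1 else 0
  | .lab a x, γ1, _ => if nw.letter (γ1 x) = a then 1 else 0
  | .lev x y, γ1, _ => if γ1 x ≤ γ1 y then 1 else 0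
  | .nuv x y, γ1, _ => if nw.rel (γ1 x) (γ1 y) then 1 else 0
  | .mem x X, γ1, γ2 => if γ1 x ∈ γ2 X then 1 else 0
  | .neq x y, γ1, _ => if γ1 x = γ1 y then 0 else 1
  | .nlab a x, γ1, _ => if nw.letter (γ1 x) = a then 0 else 1
  | .nle x y, γ1, _ => if γ1 x ≤ γ1 y then 0 else 1
  | .nnu x y, γ1, _ => if nw.rel (γ1 x) (γ1 y) then 0 else 1
  | .nmem x X, γ1, γ2 => if γ1 x ∈ γ2 X then 0 else 1
  | .or φ ψ, γ1, γ2 => sem nw φ γ1 γ2 + sem nw ψ γ1 γ2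
  | .and φ ψ, γ1, γ2 => sem nw φ γ1 γ2 * sem nw ψ γ1 γ2
  | .exF x φ, γ1, γ2 =>
      ∑ i ∈ Finset.Icc 1 nw.len, sem nw φ (Function.update γ1 x i) γ2
  | .exS X φ, γ1, γ2 =>
      ∑ T ∈ (Finset.Icc 1 nw.len).powerset, sem nw φ γ1 (Function.update γ2 X T)
  | .alF x φ, γ1, γ2 =>
      ∏ i ∈ Finset.Icc 1 nw.len, sem nw φ (Function.update γ1 x i) γ2
  | .alS X φ, γ1, γ2 =>
      ∏ T ∈ (Finset.Icc 1 nw.len).powerset, sem nw φ γ1 (Function.update γ2 X T)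

/-- Free first-order variables. -/
def freeF : WMSO K Δ → Finset ℕ
  | .const _ => ∅
  | .eqv x y => {x, y}
  | .lab _ x => {x}
  | .lev x y => {x, y}
  | .nuv x y => {x, y}
  | .mem x _ => {x}
  | .neq x y => {x, y}
  | .nlab _ x => {x}
  | .nle x y => {x, y}
  | .nnu x y => {x, y}
  | .nmem x _ => {x}
  | .or φ ψ => φ.freeF ∪ ψ.freeF
  | .and φ ψ => φ.freeF ∪ ψ.freeF
  | .exF x φ => φ.freeF.erase x
  | .exS _ φ => φ.freeF
  | .alF x φ => φ.freeF.erase x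
  | .alS _ φ => φ.freeF

/-- Free second-order variables. -/
def freeS : WMSO K Δ → Finset ℕ
  | .mem _ X => {X}
  | .nmem _ X => {X}
  | .or φ ψ => φ.freeS ∪ ψ.freeS
  | .and φ ψ => φ.freeS ∪ ψ.freeS
  | .exF _ φ => φ.freeS
  | .alF _ φ => φ.freeS
  | .exS X φ => φ.freeS.erase X
  | .alS X φ => φ.freeS.erase X
  | _ => ∅

/-- Sentences: no free variables. -/
def Sentence (φ : WMSO K Δ) : Prop := φ.freeF = ∅ ∧ φ.freeS = ∅

end WMSO

/-! ### Classical MSO over nested words and syntactically unambiguous formulae -/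

/-- Classical MSO formulae over nested words. -/
inductive MSOF (Δ : Type) : Type where
  | eqv : ℕ → ℕ → MSOF Δ
  | lab : Δ → ℕ → MSOF Δ
  | lev : ℕ → ℕ → MSOF Δ
  | nuv : ℕ → ℕ → MSOF Δ
  | mem : ℕ → ℕ → MSOF Δ
  | not : MSOF Δ → MSOF Δ
  | or : MSOF Δ → MSOF Δ → MSOF Δ
  | and : MSOF Δ → MSOF Δ → MSOF Δ
  | exF : ℕ → MSOF Δ → MSOF Δ
  | exS : ℕ → MSOF Δ → MSOF Δ
  | alF : ℕ → MSOF Δ → MSOF Δ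
  | alS : ℕ → MSOF Δ → MSOF Δ

namespace MSOF

variable {Δ : Type}

/-- Substitution of first-order variable `x` by `y` (capture cannot occur for fresh `y`). -/
def substF (x y : ℕ) : MSOF Δ → MSOF Δ
  | eqv u v => eqv (if u = x then y else u) (if v = x then y else v)
  | lab a u => lab a (if u = x then y else u)
  | lev u v => lev (if u = x then y else u) (if v = x then y else v)
  | nuv u v => nuv (if u = x then y else u) (if v = x then y else v)
  | mem u X => mem (if u = x then y else u) X
  | not φ => not (substF x y φ)
  | or φ ψ => or (substF x y φ) (substF x y ψ)
  | and φ ψ => and (substF x y φ) (substF x y ψ)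
  | exF z φ => if z = x then exF z φ else exF z (substF x y φ)
  | exS Z φ => exS Z (substF x y φ)
  | alF z φ => if z = x then alF z φ else alF z (substF x y φ)
  | alS Z φ => alS Z (substF x y φ)

/-- Substitution of second-order variable `X` by `Y`. -/
def substS (X Y : ℕ) : MSOF Δ → MSOF Δ
  | mem u Z => mem u (if Z = X then Y else Z)
  | not φ => not (substS X Y φ)
  | or φ ψ => or (substS X Y φ) (substS X Y ψ)
  | and φ ψ => and (substS X Y φ) (substS X Y ψ)
  | exF z φ => exF z (substS X Y φ)
  | exS Z φ => if Z = X then exS Z φ else exS Z (substS X Y φ)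
  | alF z φ => alF z (substS X Y φ)
  | alS Z φ => if Z = X then alS Z φ else alS Z (substS X Y φ)
  | φ => φ

/-- Largest first-order variable occurring (free or bound). -/
def maxF : MSOF Δ → ℕ
  | eqv u v => max u v
  | lab _ u => u
  | lev u v => max u v
  | nuv u v => max u v
  | mem u _ => u
  | not φ => φ.maxF
  | or φ ψ => max φ.maxF ψ.maxF
  | and φ ψ => max φ.maxF ψ.maxF
  | exF z φ => max z φ.maxF
  | exS _ φ => φ.maxF
  | alF z φ => max z φ.maxF
  | alS _ φ => φ.maxF

/-- Largest second-order variable occurring (free or bound). -/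
def maxS : MSOF Δ → ℕ
  | mem _ X => X
  | not φ => φ.maxS
  | or φ ψ => max φ.maxS ψ.maxS
  | and φ ψ => max φ.maxS ψ.maxS
  | exF _ φ => φ.maxS
  | exS Z φ => max Z φ.maxS
  | alF _ φ => φ.maxS
  | alS Z φ => max Z φ.maxS
  | _ => 0

end MSOF

/-- The lexicographic (strict) order `Y < X` on sets, used to disambiguate set
quantification: `∃y. y ∈ X ∧ ¬ y ∈ Y ∧ ∀z. (z < y → (z ∈ Y ↔ z ∈ X))`,
where `y` and `z` are the first-order variables `0` and `1`. -/
def lessSet {Δ : Type} (Y X : ℕ) : MSOF Δ :=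
  .exF 0 (.and (.mem 0 X) (.and (.not (.mem 0 Y))
    (.alF 1 (.or (.lev 0 1)
      (.and (.or (.not (.mem 1 Y)) (.mem 1 X)) (.or (.not (.mem 1 X)) (.mem 1 Y)))))))

mutual
  /-- `PlusOf K ψ φ` : `φ = ψ⁺`, the positive syntactically unambiguous weighted
  version of the classical formula `ψ`. -/
  inductive PlusOf (K : Type) {Δ : Type} : MSOF Δ → WMSO K Δ → Prop where
    | eqv : ∀ x y, PlusOf K (.eqv x y) (.eqv x y)
    | lab : ∀ (a : Δ) x, PlusOf K (.lab a x) (.lab a x)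
    | lev : ∀ x y, PlusOf K (.lev x y) (.lev x y)
    | nuv : ∀ x y, PlusOf K (.nuv x y) (.nuv x y)
    | mem : ∀ x X, PlusOf K (.mem x X) (.mem x X)
    | not : ∀ {ψ : MSOF Δ} {χ}, MinusOf K ψ χ → PlusOf K (.not ψ) χ
    | or : ∀ {ψ₁ ψ₂ : MSOF Δ} {a b c}, PlusOf K ψ₁ a → MinusOf K ψ₁ b → PlusOf K ψ₂ c →
        PlusOf K (.or ψ₁ ψ₂) (.or a (.and b c))
    | and : ∀ {ψ₁ ψ₂ : MSOF Δ} {a b}, PlusOf K ψ₁ a → PlusOf K ψ₂ b →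
        PlusOf K (.and ψ₁ ψ₂) (.and a b)
    | exF : ∀ {x : ℕ} {ψ : MSOF Δ} {a χ} (y : ℕ), y = (MSOF.exF x ψ).maxF + 1 →
        PlusOf K ψ a →
        MinusOf K (.and (.not (.lev x y)) (ψ.substF x y)) χ →
        PlusOf K (.exF x ψ) (.exF x (.and a (.alF y χ)))
    | alF : ∀ {x : ℕ} {ψ : MSOF Δ} {a}, PlusOf K ψ a → PlusOf K (.alF x ψ) (.alF x a)
    | exS : ∀ {X : ℕ} {ψ : MSOF Δ} {a χ} (Y : ℕ), Y = (MSOF.exS X ψ).maxS + 1 →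
        PlusOf K ψ a →
        MinusOf K (.and (lessSet Y X) (ψ.substS X Y)) χ →
        PlusOf K (.exS X ψ) (.exS X (.and a (.alS Y χ)))
    | alS : ∀ {X : ℕ} {ψ : MSOF Δ} {a}, PlusOf K ψ a → PlusOf K (.alS X ψ) (.alS X a)

  /-- `MinusOf K ψ φ` : `φ = ψ⁻`. -/
  inductive MinusOf (K : Type) {Δ : Type} : MSOF Δ → WMSO K Δ → Prop where
    | eqv : ∀ x y, MinusOf K (.eqv x y) (.neq x y)
    | lab : ∀ (a : Δ) x, MinusOf K (.lab a x) (.nlab a x)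
    | lev : ∀ x y, MinusOf K (.lev x y) (.nle x y)
    | nuv : ∀ x y, MinusOf K (.nuv x y) (.nnu x y)
    | mem : ∀ x X, MinusOf K (.mem x X) (.nmem x X)
    | not : ∀ {ψ : MSOF Δ} {χ}, PlusOf K ψ χ → MinusOf K (.not ψ) χ
    | or : ∀ {ψ₁ ψ₂ : MSOF Δ} {a b}, MinusOf K ψ₁ a → MinusOf K ψ₂ b →
        MinusOf K (.or ψ₁ ψ₂) (.and a b)
    | and : ∀ {ψ₁ ψ₂ : MSOF Δ} {a b c}, MinusOf K ψ₁ a → PlusOf K ψ₁ b → MinusOf K ψ₂ c →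
        MinusOf K (.and ψ₁ ψ₂) (.or a (.and b c))
    | exF : ∀ {x : ℕ} {ψ : MSOF Δ} {a}, MinusOf K ψ a → MinusOf K (.exF x ψ) (.alF x a)
    | alF : ∀ {x : ℕ} {ψ : MSOF Δ} {a χ} (y : ℕ), y = (MSOF.alF x ψ).maxF + 1 →
        MinusOf K ψ a →
        MinusOf K (.and (.not (.lev x y)) (.not (ψ.substF x y))) χ →
        MinusOf K (.alF x ψ) (.exF x (.and a (.alF y χ)))
    | exS : ∀ {X : ℕ} {ψ : MSOF Δ} {a}, MinusOf K ψ a → MinusOf K (.exS X ψ) (.alS X a)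
    | alS : ∀ {X : ℕ} {ψ : MSOF Δ} {a χ} (Y : ℕ), Y = (MSOF.alS X ψ).maxS + 1 →
        MinusOf K ψ a →
        MinusOf K (.and (lessSet Y X) (.not (ψ.substS X Y))) χ →
        MinusOf K (.alS X ψ) (.exS X (.and a (.alS Y χ)))
end

/-- A weighted formula is syntactically unambiguous if it is of the form `ψ⁺` or
`ψ⁻` for a classical formula `ψ`. -/
def SyntUnamb {K Δ : Type} (φ : WMSO K Δ) : Prop :=
  ∃ ψ : MSOF Δ, PlusOf K ψ φ ∨ MinusOf K ψ φ

/-- Almost unambiguous formulae: the smallest class containing all constants and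
all syntactically unambiguous formulae which is closed under `∧` and `∨`. -/
inductive AUMSO {K Δ : Type} : WMSO K Δ → Prop where
  | const (k : K) : AUMSO (.const k)
  | unamb {φ : WMSO K Δ} : SyntUnamb φ → AUMSO φ
  | and {φ ψ : WMSO K Δ} : AUMSO φ → AUMSO ψ → AUMSO (.and φ ψ)
  | or {φ ψ : WMSO K Δ} : AUMSO φ → AUMSO ψ → AUMSO (.or φ ψ)

/-- Weakly unambiguous formulae: additionally closed under existential quantification. -/
inductive WUMSO {K Δ : Type} : WMSO K Δ → Prop where
  | const (k : K) : WUMSO (.const k)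
  | unamb {φ : WMSO K Δ} : SyntUnamb φ → WUMSO φ
  | and {φ ψ : WMSO K Δ} : WUMSO φ → WUMSO ψ → WUMSO (.and φ ψ)
  | or {φ ψ : WMSO K Δ} : WUMSO φ → WUMSO ψ → WUMSO (.or φ ψ)
  | exF {x : ℕ} {φ : WMSO K Δ} : WUMSO φ → WUMSO (.exF x φ)
  | exS {X : ℕ} {φ : WMSO K Δ} : WUMSO φ → WUMSO (.exS X φ)

/-- Syntactically restricted MSO: every subformula `∀X.ψ` has `ψ` syntactically
unambiguous and every subformula `∀x.ψ` has `ψ` almost unambiguous. -/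
def SRMSO {K Δ : Type} : WMSO K Δ → Prop
  | .or φ ψ => SRMSO φ ∧ SRMSO ψ
  | .and φ ψ => SRMSO φ ∧ SRMSO ψ
  | .exF _ φ => SRMSO φ
  | .exS _ φ => SRMSO φ
  | .alF _ φ => AUMSO φ ∧ SRMSO φ
  | .alS _ φ => SyntUnamb φ ∧ SRMSO φ
  | _ => True

/-- Syntactically weakly restricted MSO. -/
def SWRMSO {K Δ : Type} : WMSO K Δ → Prop
  | .or φ ψ => SWRMSO φ ∧ SWRMSO ψ
  | .and φ ψ => SWRMSO φ ∧ SWRMSO ψ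
  | .exF _ φ => SWRMSO φ
  | .exS _ φ => SWRMSO φ
  | .alF _ φ => WUMSO φ ∧ SWRMSO φ
  | .alS _ φ => SyntUnamb φ ∧ SWRMSO φ
  | _ => True

/-- Formulae without set quantification. -/
def NoSetQuant {K Δ : Type} : WMSO K Δ → Prop
  | .or φ ψ => NoSetQuant φ ∧ NoSetQuant ψ
  | .and φ ψ => NoSetQuant φ ∧ NoSetQuant ψ
  | .exF _ φ => NoSetQuant φ
  | .alF _ φ => NoSetQuant φ
  | .exS _ _ => False
  | .alS _ _ => False
  | _ => True

/-- First-order fragment of `SRMSO`. -/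
def SRFO {K Δ : Type} (φ : WMSO K Δ) : Prop := SRMSO φ ∧ NoSetQuant φ

/-- `∃X₁.…∃Xₘ.ψ` with `ψ ∈ sRFO(K)`. -/
inductive SREMSO {K Δ : Type} : WMSO K Δ → Prop where
  | base {φ : WMSO K Δ} : SRFO φ → SREMSO φ
  | exS {X : ℕ} {φ : WMSO K Δ} : SREMSO φ → SREMSO (.exS X φ)

/-- A nested word series is `Z`-definable if it is the semantics of a sentence in `Z`. -/
def NWDefinable {K Δ : Type} [CommSemiring K] (Z : WMSO K Δ → Prop)
    (S : NestedWord Δ → K) : Prop :=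
  ∃ φ : WMSO K Δ, Z φ ∧ φ.Sentence ∧ ∀ nw γ1 γ2, φ.sem nw γ1 γ2 = S nw
/-- `K` is locally finite: every finitely generated subsemiring is finite. -/
def LocallyFiniteSemiring (K : Type) [CommSemiring K] : Prop :=
  ∀ s : Finset K, ((Subsemiring.closure (s : Set K) : Subsemiring K) : Set K).Finite

/-!
Every nested word splits into internal positions and arches, so it can be evaluated in a finite
algebra that combines the values of the segments before and below each arch. A sum or product over
all sets of positions is computed by the algebra of continuations of the given one: its states map a
function on the old states to the sum or product of the values of that function over all markings.
By local finiteness these values stay in a finite set, so by induction the semantics of every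
formula is computed by a finite algebra. A deterministic automaton simulates such an algebra by
remembering the value of the current segment and the letter of the innermost open call.

Conversely, a run is coded by its initial state and one set variable for each state. The formula for
the weight of the coded run sums over the states at each position, so it gives weight `0` to any
family of sets that does not assign exactly one state to each position.
-/

open Finset

/-! ### Segments of nested words and their algebras -/

namespace NestedWord

variable {Δ : Type} {nw : NestedWord Δ} {i i' j j' : ℕ}

theorem len_pos (nw : NestedWord Δ) : 1 ≤ nw.len :=
  List.length_pos_iff.2 nw.ne

theorem rel_bounds (h : nw.rel i j) : 1 ≤ i ∧ i < j ∧ j ≤ nw.len :=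
  nw.isNest.1 i j h

theorem rel_right_unique (h : nw.rel i j) (h' : nw.rel i j') : j = j' :=
  nw.isNest.2.1 i j j' h h'

theorem rel_left_unique (h : nw.rel i j) (h' : nw.rel i' j) : i = i' :=
  nw.isNest.2.2.1 i i' j h h'

theorem rel_cases (h : nw.rel i j) (h' : nw.rel i' j') :
    i' = i ∧ j' = j ∨ j' < i ∨ j < i' ∨ i < i' ∧ j' < j ∨ i' < i ∧ j < j' := by
  have hi : i' = i ↔ j' = j :=
    ⟨fun e => rel_right_unique (e ▸ h') h, fun e => rel_left_unique (e ▸ h') h⟩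
  have := nw.isNest.2.2.2 _ _ _ _ h h'
  have := nw.isNest.2.2.2 _ _ _ _ h' h
  omega

theorem not_isCall_of_rel (h : nw.rel i j) : ¬nw.IsCall j := by
  rintro ⟨k, hk⟩
  have := rel_bounds h
  have := rel_bounds hk
  have := rel_cases h hk
  omega

/-- A decomposition of the positions `a + 1, …, b` of a nested word into internal positions and
arches, read from left to right. The indices `a` and `b` are the gaps around the segment. -/
inductive Segment (nw : NestedWord Δ) : ℕ → ℕ → Type
  | nil (a : ℕ) : Segment nw a a
  | int {a i : ℕ} (s : Segment nw a i) (hc : ¬nw.IsCall (i + 1)) (hr : ¬nw.IsReturn (i + 1)) :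
      Segment nw a (i + 1)
  | arch {a i j : ℕ} (s : Segment nw a i) (t : Segment nw (i + 1) j)
      (h : nw.rel (i + 1) (j + 1)) : Segment nw a (j + 1)

theorem Segment.le {a b : ℕ} (s : nw.Segment a b) : a ≤ b := by
  induction s with
  | nil => exact le_rfl
  | int => omega
  | arch => omega

theorem Segment.nonempty_of_closed (nw : NestedWord Δ) {b : ℕ} :
    ∀ {a : ℕ}, a ≤ b → (∀ i j, nw.rel i j → (i ∈ Ioc a b ↔ j ∈ Ioc a b)) →
      Nonempty (nw.Segment a b) := by
  induction b using Nat.strong_induction_on with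
  | _ b ih =>
  intro a hab hclosed
  simp only [mem_Ioc] at ih hclosed
  obtain rfl | hlt := hab.eq_or_lt
  · exact ⟨.nil a⟩
  obtain ⟨b, rfl⟩ : ∃ b', b = b' + 1 := ⟨b - 1, by omega⟩
  have not_call : ¬nw.IsCall (b + 1) := by
    rintro ⟨j, hj⟩
    have := rel_bounds hj
    have := hclosed _ _ hj
    omega
  by_cases hret : nw.IsReturn (b + 1)
  · obtain ⟨i, hi⟩ := hret
    have hib := rel_bounds hi
    have hai := hclosed _ _ hi
    obtain ⟨i, rfl⟩ : ∃ i', i = i' + 1 := ⟨i - 1, by omega⟩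
    obtain ⟨s⟩ := ih i (by omega) (a := a) (by omega) fun k l hkl => by
      have := rel_bounds hkl
      have := rel_cases hi hkl
      have := hclosed k l hkl
      omega
    obtain ⟨t⟩ := ih b (by omega) (a := i + 1) (by omega) fun k l hkl => by
      have := rel_bounds hkl
      have := rel_cases hi hkl
      have := hclosed k l hkl
      omega
    exact ⟨.arch s t hi⟩
  · obtain ⟨s⟩ := ih b (by omega) (a := a) (by omega) fun k l hkl => by
      have := rel_bounds hkl
      have : l ≠ b + 1 := fun e => hret ⟨k, e ▸ hkl⟩
      have := hclosed k l hkl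
      omega
    exact ⟨.int s not_call hret⟩

theorem nonempty_segment (nw : NestedWord Δ) : Nonempty (nw.Segment 0 nw.len) :=
  Segment.nonempty_of_closed nw (Nat.zero_le _) fun i j h => by
    have := rel_bounds h
    simp only [mem_Ioc]
    omega

end NestedWord

open NestedWord

@[to_additive]
theorem prod_powerset_union {α A : Type*} [DecidableEq α] [CommMonoid A] {s t : Finset α}
    (h : Disjoint s t) (f : Finset α → A) :
    ∏ T ∈ (s ∪ t).powerset, f T = ∏ T ∈ s.powerset, ∏ U ∈ t.powerset, f (T ∪ U) := by
  induction t using Finset.induction_on generalizing f with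
  | empty => simp
  | insert x t hx ih =>
    obtain ⟨hxs, hst⟩ := disjoint_insert_right.1 h
    simp only [union_insert, prod_powerset_insert hx,
      prod_powerset_insert (notMem_union.2 ⟨hxs, hx⟩), ih hst, prod_mul_distrib]

open Classical in
@[to_additive]
theorem prod_powerset_Ioc_succ {A : Type*} [CommMonoid A] {a i : ℕ} (h : a ≤ i)
    (f : Finset ℕ → A) :
    ∏ T ∈ (Ioc a (i + 1)).powerset, f T =
      ∏ T ∈ (Ioc a i).powerset, ∏ p : Prop, f (if p then insert (i + 1) T else T) := by
  rw [← insert_Ioc_right_eq_Ioc_add_one h, prod_powerset_insert (by simp), ← prod_mul_distrib]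
  simp [mul_comm]

/-- An algebra interpreting segments whose positions carry labels in `L`: a deterministic bottom-up
automaton with states `M` in which every arch is evaluated from the values of the segment before it
and of the segment below it. -/
structure SegmentAlgebra (L M : Type*) where
  nil : M
  int : M → L → M
  arch : M → L → M → L → M

namespace SegmentAlgebra

variable {Δ : Type} {L L' M M' A : Type*} {nw : NestedWord Δ} {a b : ℕ}

/-- The value of a segment under the labelling `σ` of positions. -/
def eval (R : SegmentAlgebra L M) (σ : ℕ → L) {a b : ℕ} : nw.Segment a b → M
  | .nil _ => R.nil
  | .int (i := i) s _ _ => R.int (R.eval σ s) (σ (i + 1))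
  | .arch (i := i) (j := j) s t _ =>
      R.arch (R.eval σ s) (σ (i + 1)) (R.eval σ t) (σ (j + 1))

theorem eval_congr (R : SegmentAlgebra L M) {σ τ : ℕ → L} (s : nw.Segment a b)
    (h : ∀ k ∈ Ioc a b, σ k = τ k) : R.eval σ s = R.eval τ s := by
  simp only [mem_Ioc] at h
  induction s with
  | nil => rfl
  | @int a i s _ _ ih =>
    have := s.le
    simp only [eval, ih fun k hk => h k (by omega), h (i + 1) (by omega)]
  | @arch a i j s t _ ihs iht =>
    have := s.le
    have := t.le
    simp only [eval, ihs fun k hk => h k (by omega), iht fun k hk => h k (by omega),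
      h (i + 1) (by omega), h (j + 1) (by omega)]

/-- The algebra computing the values of two algebras at once. -/
@[simps]
def pair (R : SegmentAlgebra L M) (R' : SegmentAlgebra L M') : SegmentAlgebra L (M × M') where
  nil := (R.nil, R'.nil)
  int m l := (R.int m.1 l, R'.int m.2 l)
  arch m l n l' := (R.arch m.1 l n.1 l', R'.arch m.2 l n.2 l')

theorem eval_pair (R : SegmentAlgebra L M) (R' : SegmentAlgebra L M') (σ : ℕ → L)
    (s : nw.Segment a b) : (R.pair R').eval σ s = (R.eval σ s, R'.eval σ s) := by
  induction s with
  | nil => rfl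
  | int s _ _ ih => simp [eval, ih]
  | arch s t _ ihs iht => simp [eval, ihs, iht]

/-- The algebra that relabels positions by `g` before evaluating. -/
@[simps]
def comap (g : L → L') (R : SegmentAlgebra L' M) : SegmentAlgebra L M where
  nil := R.nil
  int m l := R.int m (g l)
  arch m l n l' := R.arch m (g l) n (g l')

theorem eval_comap (g : L → L') (R : SegmentAlgebra L' M) (σ : ℕ → L) (s : nw.Segment a b) :
    (R.comap g).eval σ s = R.eval (fun k => g (σ k)) s := by
  induction s with
  | nil => rfl
  | int s _ _ ih => simp [eval, ih]
  | arch s t _ ihs iht => simp [eval, ihs, iht]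

/-- The algebra that ignores the nesting and combines the values `f l` of the labels by `op`. -/
@[simps]
def ofOp (op : M → M → M) (e : M) (f : L → M) : SegmentAlgebra L M where
  nil := e
  int m l := op m (f l)
  arch m l n l' := op (op (op m (f l)) n) (f l')

theorem eval_ofOp {op : M → M → M} {e : M} {f : L → M} {σ : ℕ → L} {v : ℕ → ℕ → M}
    (self : ∀ a, v a a = e) (single : ∀ i, v i (i + 1) = f (σ (i + 1)))
    (append : ∀ {a b c}, a ≤ b → b ≤ c → v a c = op (v a b) (v b c)) (s : nw.Segment a b) :
    (ofOp op e f).eval σ s = v a b := by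
  induction s with
  | nil => exact (self _).symm
  | @int a i s _ _ ih => simp only [eval, ofOp_int, ih, ← single, ← append s.le i.le_succ]
  | @arch a i j s t _ ihs iht =>
    have hi := s.le.trans i.le_succ
    simp only [eval, ofOp_arch, ihs, iht, ← single, ← append s.le i.le_succ, ← append hi t.le,
      ← append (hi.trans t.le) j.le_succ]

/-- The algebra multiplying (`sumMarkings`: summing) the values of `R` over all ways to mark some of
the positions. Its states are continuations: they map a test function `f` on the states of `R` to
the product (sum) of the values of `f` over all markings. -/
@[to_additive]
def prodMarkings [CommMonoid A] (R : SegmentAlgebra (L × Prop) M) :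
    SegmentAlgebra L ((M → A) → A) where
  nil f := f R.nil
  int v l f := v fun m => ∏ p, f (R.int m (l, p))
  arch v l w l' f :=
    v fun m => ∏ p, w fun n => ∏ p', f (R.arch m (l, p) n (l', p'))

@[to_additive]
theorem eval_prodMarkings [CommMonoid A] (R : SegmentAlgebra (L × Prop) M) (σ : ℕ → L)
    (s : nw.Segment a b) (f : M → A) :
    R.prodMarkings.eval σ s f =
      ∏ T ∈ (Ioc a b).powerset, f (R.eval (fun k => (σ k, k ∈ T)) s) := by
  induction s generalizing f with
  | nil => simp [eval, prodMarkings]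
  | @int a i s _ _ ih =>
    rw [prod_powerset_Ioc_succ s.le]
    refine (ih _).trans (prod_congr rfl fun T hT => prod_congr rfl fun p _ => congrArg f ?_)
    have hT' := mem_powerset.1 hT
    rw [eval]
    congr 1
    · refine R.eval_congr s fun k hk => ?_
      have := mem_Ioc.1 hk
      grind
    · grind
  | @arch a i j s t _ ihs iht =>
    have hi := s.le.trans i.le_succ
    rw [prod_powerset_Ioc_succ (hi.trans t.le), ← Ioc_union_Ioc_eq_Ioc hi t.le,
      prod_powerset_union (Ioc_disjoint_Ioc_of_le le_rfl), prod_powerset_Ioc_succ s.le]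
    refine (ihs _).trans (prod_congr rfl fun T hT => prod_congr rfl fun p _ => ?_)
    refine (iht _).trans (prod_congr rfl fun U hU => prod_congr rfl fun p' _ => congrArg f ?_)
    have hT' := mem_powerset.1 hT
    have hU' := mem_powerset.1 hU
    have hij := t.le
    rw [eval]
    congr 1
    · refine R.eval_congr s fun k hk => ?_
      have := mem_Ioc.1 hk
      grind
    · grind
    · refine R.eval_congr t fun k hk => ?_
      have := mem_Ioc.1 hk
      grind
    · grind

/-- The algebra computing whether labels satisfying `p` and `q` occur, and whether they occur in
this order. -/
def before (p q : L → Prop) : SegmentAlgebra L (Prop × Prop × Prop) :=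
  ofOp (fun m n => (m.1 ∨ n.1, m.2.1 ∨ n.2.1, m.2.2 ∨ n.2.2 ∨ m.1 ∧ n.2.1))
    (False, False, False) fun l => (p l, q l, False)

theorem eval_before (p q : L → Prop) (σ : ℕ → L) (s : nw.Segment a b) :
    (before p q).eval σ s = (∃ i ∈ Ioc a b, p (σ i), ∃ j ∈ Ioc a b, q (σ j),
      ∃ i ∈ Ioc a b, ∃ j ∈ Ioc a b, i < j ∧ p (σ i) ∧ q (σ j)) := by
  refine eval_ofOp (v := fun a b => (∃ i ∈ Ioc a b, p (σ i), ∃ j ∈ Ioc a b, q (σ j),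
    ∃ i ∈ Ioc a b, ∃ j ∈ Ioc a b, i < j ∧ p (σ i) ∧ q (σ j))) (by simp) (fun i => ?_) ?_ s
  · simp only [Nat.Ioc_succ_singleton, mem_singleton, exists_eq_left, lt_irrefl, false_and]
  · intro a b c hab hbc
    have mem_or (k : ℕ) : k ∈ Ioc a c ↔ k ∈ Ioc a b ∨ k ∈ Ioc b c := by
      rw [← mem_union, Ioc_union_Ioc_eq_Ioc hab hbc]
    have lt_of_mem {i j : ℕ} (hi : i ∈ Ioc a b) (hj : j ∈ Ioc b c) : i < j :=
      (mem_Ioc.1 hi).2.trans_lt (mem_Ioc.1 hj).1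
    simp only [Prod.mk.injEq, mem_or, or_and_right, exists_or, true_and]
    refine propext ⟨?_, ?_⟩
    · rintro (⟨i, hi, ⟨j, hj, h⟩ | ⟨j, hj, -, hp, hq⟩⟩ | ⟨i, hi, ⟨j, hj, hij, -⟩ | ⟨j, hj, h⟩⟩)
      · exact .inl ⟨i, hi, j, hj, h⟩
      · exact .inr (.inr ⟨⟨i, hi, hp⟩, j, hj, hq⟩)
      · exact absurd hij (lt_of_mem hj hi).asymm
      · exact .inr (.inl ⟨i, hi, j, hj, h⟩)
    · rintro (⟨i, hi, j, hj, h⟩ | ⟨i, hi, j, hj, h⟩ | ⟨⟨i, hi, hp⟩, j, hj, hq⟩)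
      · exact .inl ⟨i, hi, .inl ⟨j, hj, h⟩⟩
      · exact .inr ⟨i, hi, .inr ⟨j, hj, h⟩⟩
      · exact .inl ⟨i, hi, .inr ⟨j, hj, lt_of_mem hi hj, hp, hq⟩⟩

/-- The algebra computing whether some arch has its call labelled in `p` and its return in `q`. -/
@[simps]
def hasArch (p q : L → Prop) : SegmentAlgebra L Prop where
  nil := False
  int m _ := m
  arch m l n l' := m ∨ n ∨ p l ∧ q l'

theorem eval_hasArch (p q : L → Prop) (σ : ℕ → L) (s : nw.Segment a b) :
    (hasArch p q).eval σ s =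
      ∃ i ∈ Ioc a b, ∃ j ∈ Ioc a b, nw.rel i j ∧ p (σ i) ∧ q (σ j) := by
  simp only [mem_Ioc]
  induction s with
  | nil a => exact propext ⟨False.elim, fun ⟨_, _, _⟩ => by omega⟩
  | @int a i s hc hr ih =>
    refine ih.trans (propext (exists_congr fun k => ?_))
    constructor
    · rintro ⟨hk, l, hl, h⟩
      exact ⟨by omega, l, by omega, h⟩
    · rintro ⟨hk, l, hl, h, h'⟩
      have : k ≠ i + 1 := fun e => hc ⟨l, e ▸ h⟩
      have : l ≠ i + 1 := fun e => hr ⟨k, e ▸ h⟩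
      exact ⟨by omega, l, by omega, h, h'⟩
  | @arch a i j s t h ihs iht =>
    have hai := s.le
    have hij := t.le
    simp only [eval, hasArch_arch, ihs, iht, eq_iff_iff]
    constructor
    · rintro (⟨k, hk, l, hl, h⟩ | ⟨k, hk, l, hl, h⟩ | h')
      · exact ⟨k, by omega, l, by omega, h⟩
      · exact ⟨k, by omega, l, by omega, h⟩
      · exact ⟨i + 1, by omega, j + 1, by omega, h, h'⟩
    · rintro ⟨k, hk, l, hl, hkl, h'⟩
      have := rel_bounds hkl
      obtain ⟨rfl, rfl⟩ | hcases := rel_cases h hkl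
      · exact .inr (.inr h')
      · obtain hl' | hk' : l ≤ i ∨ i + 1 < k := by omega
        · exact .inl ⟨k, by omega, l, by omega, hkl, h'⟩
        · exact .inr (.inl ⟨k, by omega, l, by omega, hkl, h'⟩)

end SegmentAlgebra

/-! ### Recognizable semantics of formulae -/

@[to_additive]
theorem prod_powerset_ite_card_eq_one {α A : Type*} [CommMonoid A] (s : Finset α)
    (f : Finset α → A) :
    ∏ T ∈ s.powerset, (if #T = 1 then f T else 1) = ∏ i ∈ s, f {i} := by
  rw [← prod_filter, ← powersetCard_eq_filter, powersetCard_one, prod_map]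
  rfl

theorem card_eq_one_iff_exists_not_lt {s T : Finset ℕ} (h : T ⊆ s) :
    #T = 1 ↔ (∃ i ∈ s, i ∈ T) ∧ ¬∃ i ∈ s, ∃ j ∈ s, i < j ∧ i ∈ T ∧ j ∈ T := by
  rw [card_eq_one]
  constructor
  · rintro ⟨i, rfl⟩
    simp only [singleton_subset_iff] at h
    simp only [mem_singleton]
    exact ⟨⟨i, h, rfl⟩, by omega⟩
  · rintro ⟨⟨i, -, hi⟩, hlt⟩
    push Not at hlt
    refine ⟨i, eq_singleton_iff_unique_mem.2 ⟨hi, fun j hj => ?_⟩⟩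
    by_contra hne
    obtain hij | hji := Nat.lt_or_gt_of_ne hne
    · exact hlt j (h hj) i (h hi) hij hj hi
    · exact hlt i (h hi) j (h hj) hji hi hj

/-- A quantity depending on a nested word and a labelling of its positions is recognizable if it
can be read off from the value of the word in a finite segment algebra. -/
def Recognizable {Δ : Type} {L A : Type*} (F : NestedWord Δ → (ℕ → L) → A) : Prop :=
  ∃ (M : Type) (_ : Finite M) (R : SegmentAlgebra L M) (out : M → A),
    ∀ nw σ (s : nw.Segment 0 nw.len), F nw σ = out (R.eval σ s)

namespace Recognizable

variable {Δ : Type} {L L' A B C : Type*}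
  {F : NestedWord Δ → (ℕ → L) → A} {G : NestedWord Δ → (ℕ → L) → B}

theorem const (c : A) : Recognizable fun (_ : NestedWord Δ) (_ : ℕ → L) => c :=
  ⟨Unit, inferInstance, .ofOp (fun _ _ => ()) () fun _ => (), fun _ => c, fun _ _ _ => rfl⟩

theorem map₂ (g : A → B → C) (hF : Recognizable F) (hG : Recognizable G) :
    Recognizable fun nw σ => g (F nw σ) (G nw σ) := by
  obtain ⟨M, _, R, out, hR⟩ := hF
  obtain ⟨M', _, R', out', hR'⟩ := hG
  refine ⟨M × M', inferInstance, R.pair R', fun m => g (out m.1) (out' m.2), fun nw σ s => ?_⟩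
  simp only [R.eval_pair, hR nw σ s, hR' nw σ s]

theorem map (g : A → B) (hF : Recognizable F) : Recognizable fun nw σ => g (F nw σ) :=
  hF.map₂ (fun a _ => g a) hF

theorem comap (g : L' → L) (hF : Recognizable F) :
    Recognizable fun nw (σ : ℕ → L') => F nw fun k => g (σ k) := by
  obtain ⟨M, hM, R, out, hR⟩ := hF
  exact ⟨M, hM, R.comap g, out, fun nw σ s => by simp only [R.eval_comap, hR _ _ s]⟩

theorem congr_labels (hF : Recognizable F) {nw : NestedWord Δ} {σ τ : ℕ → L}
    (h : ∀ k ∈ Ioc 0 nw.len, σ k = τ k) : F nw σ = F nw τ := by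
  obtain ⟨M, _, R, out, hR⟩ := hF
  obtain ⟨s⟩ := nw.nonempty_segment
  rw [hR nw σ s, hR nw τ s, R.eval_congr s h]

theorem exists_pos (p : L → Prop) :
    Recognizable fun (nw : NestedWord Δ) σ => ∃ i ∈ Ioc 0 nw.len, p (σ i) :=
  ⟨_, inferInstance, .before p p, fun m => m.1, fun _ _ _ => by rw [SegmentAlgebra.eval_before]⟩

theorem exists_lt (p q : L → Prop) :
    Recognizable fun (nw : NestedWord Δ) σ =>
      ∃ i ∈ Ioc 0 nw.len, ∃ j ∈ Ioc 0 nw.len, i < j ∧ p (σ i) ∧ q (σ j) :=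
  ⟨_, inferInstance, .before p q, fun m => m.2.2, fun _ _ _ => by rw [SegmentAlgebra.eval_before]⟩

theorem exists_rel (p q : L → Prop) :
    Recognizable fun (nw : NestedWord Δ) σ =>
      ∃ i ∈ Ioc 0 nw.len, ∃ j ∈ Ioc 0 nw.len, nw.rel i j ∧ p (σ i) ∧ q (σ j) :=
  ⟨_, inferInstance, .hasArch p q, id, fun _ _ s => (SegmentAlgebra.eval_hasArch p q _ s).symm⟩

section Markings

variable {A : Type} [CommMonoid A] {F : NestedWord Δ → (ℕ → L × Prop) → A}

@[to_additive]
theorem prodMarkings (hA : ∀ s : Set A, s.Finite → (Submonoid.closure s : Set A).Finite)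
    (hF : Recognizable F) :
    Recognizable fun nw (σ : ℕ → L) =>
      ∏ T ∈ (Ioc 0 nw.len).powerset, F nw fun k => (σ k, k ∈ T) := by
  obtain ⟨M, _, R, out, hR⟩ := hF
  let B := Submonoid.closure (Set.range out)
  have : Finite B := (hA _ (Set.finite_range out)).to_subtype
  let outB (m : M) : B := ⟨out m, Submonoid.subset_closure ⟨m, rfl⟩⟩
  refine ⟨(M → B) → B, inferInstance, R.prodMarkings, fun v => v outB, fun nw σ s => ?_⟩
  simp only [R.eval_prodMarkings, Submonoid.coe_finsetProd, hR _ _ s, outB]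

open Classical in
@[to_additive]
theorem prodPositions (hA : ∀ s : Set A, s.Finite → (Submonoid.closure s : Set A).Finite)
    (hF : Recognizable F) :
    Recognizable fun nw (σ : ℕ → L) => ∏ i ∈ Ioc 0 nw.len, F nw fun k => (σ k, k = i) := by
  have marked_once := map₂ (fun p q => p ∧ ¬q) (exists_pos (Δ := Δ) (L := L × Prop) (·.2))
    (exists_lt (·.2) (·.2))
  convert prodMarkings hA (map₂ (fun p a => if p then a else 1) marked_once hF) using 3 with nw σ
  calc ∏ i ∈ Ioc 0 nw.len, F nw (fun k => (σ k, k = i))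
    _ = ∏ T ∈ (Ioc 0 nw.len).powerset, if #T = 1 then F nw (fun k => (σ k, k ∈ T)) else 1 := by
      simp only [prod_powerset_ite_card_eq_one, mem_singleton]
    _ = _ := prod_congr rfl fun T hT => by
      congr 1
      exact propext (card_eq_one_iff_exists_not_lt (mem_powerset.1 hT))

end Markings

end Recognizable

/-- The label of a position under an assignment: its letter and the first-order (`fo`) and
second-order (`so`) variables that are interpreted by the position or by a set containing it. -/
structure Label (Δ : Type) where
  letter : Δ
  fo : ℕ → Prop
  so : ℕ → Prop

/-- The labelling of the positions of a nested word by an assignment of the variables. -/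
def NestedWord.label {Δ : Type} (nw : NestedWord Δ) (γ₁ : ℕ → ℕ) (γ₂ : ℕ → Finset ℕ) (k : ℕ) :
    Label Δ where
  letter := nw.letter k
  fo x := k = γ₁ x
  so X := k ∈ γ₂ X

/-- A quantity depending on a nested word and an assignment is recognizable if it is a recognizable
function of the associated labelling, as long as the first-order variables in `V` are interpreted by
positions of the word. -/
def AssignmentRecognizable {Δ : Type} {A : Type*} (V : Finset ℕ)
    (f : NestedWord Δ → (ℕ → ℕ) → (ℕ → Finset ℕ) → A) : Prop :=
  ∃ F, Recognizable F ∧ ∀ nw γ₁ γ₂, (∀ x ∈ V, γ₁ x ∈ Ioc 0 nw.len) →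
    f nw γ₁ γ₂ = F nw (nw.label γ₁ γ₂)

namespace AssignmentRecognizable

variable {Δ : Type} {A B C : Type*} {V W : Finset ℕ}
  {f : NestedWord Δ → (ℕ → ℕ) → (ℕ → Finset ℕ) → A}
  {g : NestedWord Δ → (ℕ → ℕ) → (ℕ → Finset ℕ) → B}

theorem const (c : A) :
    AssignmentRecognizable V fun (_ : NestedWord Δ) _ _ => c :=
  ⟨_, .const c, fun _ _ _ _ => rfl⟩

theorem map (h : A → B) (hf : AssignmentRecognizable V f) :
    AssignmentRecognizable V fun nw γ₁ γ₂ => h (f nw γ₁ γ₂) := by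
  obtain ⟨F, hF, hfF⟩ := hf
  exact ⟨_, hF.map h, fun nw γ₁ γ₂ hV => congrArg h (hfF nw γ₁ γ₂ hV)⟩

theorem map₂ (h : A → B → C) (hf : AssignmentRecognizable V f)
    (hg : AssignmentRecognizable W g) :
    AssignmentRecognizable (V ∪ W) fun nw γ₁ γ₂ => h (f nw γ₁ γ₂) (g nw γ₁ γ₂) := by
  obtain ⟨F, hF, hfF⟩ := hf
  obtain ⟨G, hG, hgG⟩ := hg
  refine ⟨_, hF.map₂ h hG, fun nw γ₁ γ₂ hVW => ?_⟩
  exact congrArg₂ h (hfF nw γ₁ γ₂ fun x hx => hVW x (mem_union_left W hx))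
    (hgG nw γ₁ γ₂ fun x hx => hVW x (mem_union_right V hx))

theorem mono (h : V ⊆ W) (hf : AssignmentRecognizable V f) : AssignmentRecognizable W f := by
  obtain ⟨F, hF, hfF⟩ := hf
  exact ⟨F, hF, fun nw γ₁ γ₂ hW => hfF nw γ₁ γ₂ fun x hx => hW x (h hx)⟩

theorem ite {P : NestedWord Δ → (ℕ → ℕ) → (ℕ → Finset ℕ) → Prop}
    {_ : ∀ nw γ₁ γ₂, Decidable (P nw γ₁ γ₂)} (hP : AssignmentRecognizable V P) (c d : A) :
    AssignmentRecognizable V fun nw γ₁ γ₂ => if P nw γ₁ γ₂ then c else d := by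
  classical
  convert hP.map fun p => if p then c else d

theorem of_label (p : Label Δ → Prop) (x : ℕ) :
    AssignmentRecognizable {x} fun nw γ₁ γ₂ => p (nw.label γ₁ γ₂ (γ₁ x)) := by
  refine ⟨_, .exists_pos fun l => l.fo x ∧ p l, fun nw γ₁ γ₂ hV => ?_⟩
  simp only [mem_singleton, forall_eq] at hV
  simp [NestedWord.label, mem_Ioc.1 hV]

theorem le (x y : ℕ) :
    AssignmentRecognizable {x, y} fun (_ : NestedWord Δ) γ₁ _ => γ₁ x ≤ γ₁ y := by
  refine ⟨_, (Recognizable.exists_lt (·.fo y) (·.fo x)).map Not, fun nw γ₁ γ₂ hV => ?_⟩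
  simp only [mem_insert, mem_singleton, forall_eq_or_imp, forall_eq] at hV
  simp [NestedWord.label, mem_Ioc.1 hV.1, mem_Ioc.1 hV.2]

theorem rel (x y : ℕ) :
    AssignmentRecognizable {x, y} fun (nw : NestedWord Δ) γ₁ _ => nw.rel (γ₁ x) (γ₁ y) := by
  refine ⟨_, .exists_rel (·.fo x) (·.fo y), fun nw γ₁ γ₂ hV => ?_⟩
  simp only [mem_insert, mem_singleton, forall_eq_or_imp, forall_eq] at hV
  simp [NestedWord.label, mem_Ioc.1 hV.1, mem_Ioc.1 hV.2]

section Quantifiers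

variable {A : Type} [CommMonoid A] {f : NestedWord Δ → (ℕ → ℕ) → (ℕ → Finset ℕ) → A}

@[to_additive]
theorem prod_fo (hA : ∀ s : Set A, s.Finite → (Submonoid.closure s : Set A).Finite) (x : ℕ)
    (hf : AssignmentRecognizable V f) :
    AssignmentRecognizable (V.erase x) fun nw γ₁ γ₂ =>
      ∏ i ∈ Ioc 0 nw.len, f nw (Function.update γ₁ x i) γ₂ := by
  obtain ⟨F, hF, hfF⟩ := hf
  refine ⟨_, .prodPositions hA (hF.comap fun l : Label Δ × Prop =>
    { l.1 with fo := Function.update l.1.fo x l.2 }), fun nw γ₁ γ₂ hV => ?_⟩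
  refine prod_congr rfl fun i hi => (hfF _ _ _ fun y hy => ?_).trans (congrArg _ ?_)
  · grind
  · funext k
    simp only [NestedWord.label, Label.mk.injEq, true_and, and_true]
    grind

@[to_additive]
theorem prod_so (hA : ∀ s : Set A, s.Finite → (Submonoid.closure s : Set A).Finite) (X : ℕ)
    (hf : AssignmentRecognizable V f) :
    AssignmentRecognizable V fun nw γ₁ γ₂ =>
      ∏ T ∈ (Ioc 0 nw.len).powerset, f nw γ₁ (Function.update γ₂ X T) := by
  obtain ⟨F, hF, hfF⟩ := hf
  refine ⟨_, .prodMarkings hA (hF.comap fun l : Label Δ × Prop =>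
    { l.1 with so := Function.update l.1.so X l.2 }), fun nw γ₁ γ₂ hV => ?_⟩
  refine prod_congr rfl fun T _ => (hfF _ _ _ hV).trans (congrArg _ ?_)
  funext k
  simp only [NestedWord.label, Label.mk.injEq, true_and]
  grind

end Quantifiers

end AssignmentRecognizable

theorem LocallyFiniteSemiring.finite_submonoid_closure {K : Type} [CommSemiring K]
    (hK : LocallyFiniteSemiring K) (s : Set K) (hs : s.Finite) :
    (Submonoid.closure s : Set K).Finite := by
  refine (hK hs.toFinset).subset (?_ : Submonoid.closure s ≤ (Subsemiring.closure _).toSubmonoid)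
  exact Submonoid.closure_le.2 (hs.coe_toFinset.symm.subset.trans Subsemiring.subset_closure)

theorem LocallyFiniteSemiring.finite_addSubmonoid_closure {K : Type} [CommSemiring K]
    (hK : LocallyFiniteSemiring K) (s : Set K) (hs : s.Finite) :
    (AddSubmonoid.closure s : Set K).Finite := by
  refine (hK hs.toFinset).subset
    (?_ : AddSubmonoid.closure s ≤ (Subsemiring.closure _).toAddSubmonoid)
  exact AddSubmonoid.closure_le.2 (hs.coe_toFinset.symm.subset.trans Subsemiring.subset_closure)

theorem WMSO.assignmentRecognizable_sem {K Δ : Type} [CommSemiring K]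
    (hK : LocallyFiniteSemiring K) (φ : WMSO K Δ) :
    AssignmentRecognizable φ.freeF fun nw => φ.sem nw := by
  have Icc_one (n : ℕ) : Icc 1 n = Ioc 0 n := Icc_add_one_left_eq_Ioc 0 n
  have hmul := hK.finite_submonoid_closure
  have hadd := hK.finite_addSubmonoid_closure
  have eqv (x y : ℕ) :
      AssignmentRecognizable {x, y} fun (_ : NestedWord Δ) γ₁ _ => γ₁ x = γ₁ y :=
    .mono (by simp) (.of_label (·.fo y) x)
  have lab (a : Δ) := AssignmentRecognizable.of_label fun l : Label Δ => l.letter = a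
  have mem (X : ℕ) := AssignmentRecognizable.of_label fun l : Label Δ => l.so X
  induction φ with
  | const k => exact .const k
  | eqv x y => exact (eqv x y).ite 1 0
  | lab a x => exact (lab a x).ite 1 0
  | lev x y => exact (AssignmentRecognizable.le x y).ite 1 0
  | nuv x y => exact (AssignmentRecognizable.rel x y).ite 1 0
  | mem x X => exact (mem X x).ite 1 0
  | neq x y => exact (eqv x y).ite 0 1
  | nlab a x => exact (lab a x).ite 0 1
  | nle x y => exact (AssignmentRecognizable.le x y).ite 0 1
  | nnu x y => exact (AssignmentRecognizable.rel x y).ite 0 1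
  | nmem x X => exact (mem X x).ite 0 1
  | or φ ψ hφ hψ => exact hφ.map₂ (· + ·) hψ
  | and φ ψ hφ hψ => exact hφ.map₂ (· * ·) hψ
  | exF x φ hφ => simpa only [WMSO.sem, WMSO.freeF, Icc_one] using hφ.sum_fo hadd x
  | exS X φ hφ => simpa only [WMSO.sem, WMSO.freeF, Icc_one] using hφ.sum_so hadd X
  | alF x φ hφ => simpa only [WMSO.sem, WMSO.freeF, Icc_one] using hφ.prod_fo hmul x
  | alS X φ hφ => simpa only [WMSO.sem, WMSO.freeF, Icc_one] using hφ.prod_so hmul X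

theorem NWDefinable.exists_recognizable {K Δ : Type} [CommSemiring K] {Z : WMSO K Δ → Prop}
    (hK : LocallyFiniteSemiring K) {S : NestedWord Δ → K} (hS : NWDefinable Z S) :
    ∃ F, Recognizable F ∧ ∀ nw, S nw = F nw nw.letter := by
  obtain ⟨φ, -, hφ, hsem⟩ := hS
  obtain ⟨F, hF, hφF⟩ := φ.assignmentRecognizable_sem hK
  refine ⟨_, hF.comap fun a => ⟨a, fun _ => False, fun _ => False⟩, fun nw => ?_⟩
  rw [← hsem nw (fun _ => 0) fun _ => ∅]
  refine (hφF nw _ _ (by simp [hφ.1])).trans (hF.congr_labels fun k hk => ?_)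
  simp [NestedWord.label, (mem_Ioc.1 hk).1.ne']

/-! ### From algebras to automata -/

theorem clampFun_val {Q : Type} {n : ℕ} (r : Fin (n + 1) → Q) (k : Fin (n + 1)) :
    clampFun r k = r k := by
  simp [clampFun, Nat.min_eq_left (Fin.is_le k)]

namespace WNWA

variable {K Δ : Type} [CommSemiring K] (A : WNWA K Δ) {nw : NestedWord Δ} {ρ : ℕ → A.Q} {i j : ℕ}

theorem posWeight_of_isCall (h : nw.IsCall j) :
    A.posWeight nw ρ j = A.δcall (ρ (j - 1)) (nw.letter j) (ρ j) :=
  if_pos h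

theorem posWeight_of_rel (h : nw.rel i j) :
    A.posWeight nw ρ j = A.δret (ρ (j - 1)) (ρ (i - 1)) (nw.letter j) (ρ j) := by
  have hr : nw.IsReturn j := ⟨i, h⟩
  rw [posWeight, if_neg (not_isCall_of_rel h), dif_pos hr, rel_left_unique hr.choose_spec h]

theorem posWeight_of_not_isCall_of_not_isReturn (hc : ¬nw.IsCall j) (hr : ¬nw.IsReturn j) :
    A.posWeight nw ρ j = A.δint (ρ (j - 1)) (nw.letter j) (ρ j) := by
  rw [posWeight, if_neg hc, dif_neg hr]

end WNWA

/-- A deterministic nested word automaton: `ret q p b` is the successor of the state `q` when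
reading the return letter `b`, where `p` is the state before the matching call. -/
structure DetNWA (Q Δ : Type*) where
  init : Q
  call : Q → Δ → Q
  int : Q → Δ → Q
  ret : Q → Q → Δ → Q

namespace DetNWA

variable {K Q Δ : Type} [CommSemiring K] (D : DetNWA Q Δ) (nw : NestedWord Δ) {i k : ℕ}

open Classical in
/-- The state after reading the first `k` positions. -/
noncomputable def run : ℕ → Q
  | 0 => D.init
  | k + 1 =>
    if nw.IsCall (k + 1) then D.call (run k) (nw.letter (k + 1))
    else if h : nw.IsReturn (k + 1) then
      D.ret (run k) (run (h.choose - 1)) (nw.letter (k + 1))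
    else D.int (run k) (nw.letter (k + 1))
  decreasing_by
  all_goals try exact k.lt_succ_self
  have := rel_bounds h.choose_spec
  omega

theorem run_zero : D.run nw 0 = D.init := by
  rw [run]

variable {nw}

theorem run_succ_of_isCall (h : nw.IsCall (k + 1)) :
    D.run nw (k + 1) = D.call (D.run nw k) (nw.letter (k + 1)) := by
  rw [run, if_pos h]

theorem run_succ_of_rel (h : nw.rel (i + 1) (k + 1)) :
    D.run nw (k + 1) = D.ret (D.run nw k) (D.run nw i) (nw.letter (k + 1)) := by
  have hr : nw.IsReturn (k + 1) := ⟨_, h⟩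
  rw [run, if_neg (not_isCall_of_rel h), dif_pos hr, rel_left_unique hr.choose_spec h,
    Nat.add_sub_cancel]

theorem run_succ_of_not_isCall_of_not_isReturn (hc : ¬nw.IsCall (k + 1))
    (hr : ¬nw.IsReturn (k + 1)) :
    D.run nw (k + 1) = D.int (D.run nw k) (nw.letter (k + 1)) := by
  rw [run, if_neg hc, dif_neg hr]

open Classical in
/-- The deterministic automaton `D` as a weighted automaton whose transitions have weight one and
whose final weights are given by `κ`. -/
noncomputable abbrev toWNWA [Fintype Q] (κ : Q → K) : WNWA K Δ where
  Q := Q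
  ι q := if q = D.init then 1 else 0
  δcall p a q := if q = D.call p a then 1 else 0
  δint p a q := if q = D.int p a then 1 else 0
  δret p p' a q := if q = D.ret p p' a then 1 else 0
  κ := κ

variable [Fintype Q] {κ : Q → K} {ρ : ℕ → Q}

open Classical in
theorem posWeight_toWNWA (h : ∀ i ≤ k, ρ i = D.run nw i) :
    (D.toWNWA κ).posWeight nw ρ (k + 1) = if ρ (k + 1) = D.run nw (k + 1) then 1 else 0 := by
  by_cases hc : nw.IsCall (k + 1)
  · rw [WNWA.posWeight_of_isCall _ hc, run_succ_of_isCall _ hc, ← h k le_rfl]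
    rfl
  by_cases hr : nw.IsReturn (k + 1)
  · obtain ⟨i, hi⟩ := hr
    have hik := rel_bounds hi
    obtain ⟨i, rfl⟩ : ∃ i', i = i' + 1 := ⟨i - 1, by omega⟩
    rw [WNWA.posWeight_of_rel _ hi, run_succ_of_rel _ hi, ← h k le_rfl, ← h i (by omega)]
    rfl
  · rw [WNWA.posWeight_of_not_isCall_of_not_isReturn _ hc hr,
      run_succ_of_not_isCall_of_not_isReturn _ hc hr, ← h k le_rfl]
    rfl

theorem runWeight_toWNWA_run (h : ∀ k ≤ nw.len, ρ k = D.run nw k) :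
    (D.toWNWA κ).runWeight nw ρ = 1 := by
  refine prod_eq_one fun j hj => ?_
  obtain ⟨hj₁, hj₂⟩ := mem_Icc.1 hj
  obtain ⟨k, rfl⟩ : ∃ k, j = k + 1 := ⟨j - 1, by omega⟩
  rw [D.posWeight_toWNWA fun i hi => h i (by omega), if_pos (h _ hj₂)]

theorem runWeight_toWNWA_of_ne (h₀ : ρ 0 = D.init) (hk : k ≤ nw.len) (h : ρ k ≠ D.run nw k) :
    (D.toWNWA κ).runWeight nw ρ = 0 := by
  induction k using Nat.strong_induction_on with
  | _ k ih =>
  obtain _ | k := k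
  · exact absurd (h₀.trans (D.run_zero nw).symm) h
  by_cases hlt : ∃ i ≤ k, ρ i ≠ D.run nw i
  · obtain ⟨i, hi, hne⟩ := hlt
    exact ih i (by omega) (by omega) hne
  · push Not at hlt
    exact prod_eq_zero (mem_Icc.2 ⟨by omega, hk⟩) ((D.posWeight_toWNWA hlt).trans (if_neg h))

theorem behavior_toWNWA : (D.toWNWA κ).behavior nw = κ (D.run nw nw.len) := by
  refine (Fintype.sum_eq_single (fun k : Fin _ => D.run nw k) fun r hr => ?_).trans ?_
  · by_cases h₀ : r 0 = D.init
    · obtain ⟨k, hk⟩ := Function.ne_iff.1 hr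
      rw [runWeight_toWNWA_of_ne D ((clampFun_val r 0).trans h₀) k.is_le
        (by rwa [clampFun_val]), mul_zero, zero_mul]
    · simp [h₀]
  · rw [runWeight_toWNWA_run D fun k hk => clampFun_val _ (⟨k, by omega⟩ : Fin (nw.len + 1))]
    simp [run_zero]

end DetNWA

namespace SegmentAlgebra

variable {Δ M : Type} (R : SegmentAlgebra Δ M) {nw : NestedWord Δ} {a b : ℕ}

/-- The deterministic automaton computing the values of segments. The second component of a state
is the letter of the innermost open call, which a return cannot inspect directly. -/
def toDetNWA : DetNWA (M × Option Δ) Δ where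
  init := (R.nil, none)
  call _ a := (R.nil, some a)
  int q a := (R.int q.1 a, q.2)
  ret q p b := (R.arch p.1 (q.2.getD b) q.1 b, p.2)

theorem run_toDetNWA (s : nw.Segment a b) {e : Option Δ}
    (h : R.toDetNWA.run nw a = (R.nil, e)) :
    R.toDetNWA.run nw b = (R.eval nw.letter s, e) := by
  induction s generalizing e with
  | nil => exact h
  | int s hc hr ih =>
    rw [DetNWA.run_succ_of_not_isCall_of_not_isReturn _ hc hr, ih h]
    rfl
  | arch s t hrel ihs iht =>
    rw [DetNWA.run_succ_of_rel _ hrel, ihs h, iht (DetNWA.run_succ_of_isCall _ ⟨_, hrel⟩)]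
    rfl

end SegmentAlgebra

theorem Recognizable.nwRegular {K Δ : Type} [CommSemiring K] [Finite Δ]
    {F : NestedWord Δ → (ℕ → Δ) → K} (hF : Recognizable F) :
    NWRegular fun nw => F nw nw.letter := by
  obtain ⟨M, _, R, out, hR⟩ := hF
  have := Fintype.ofFinite (M × Option Δ)
  refine ⟨R.toDetNWA.toWNWA fun q => out q.1, fun nw => ?_⟩
  obtain ⟨s⟩ := nw.nonempty_segment
  rw [DetNWA.behavior_toWNWA, R.run_toDetNWA s (DetNWA.run_zero _ _)]
  exact (hR nw _ s).symm

/-! ### Expressible quantities -/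

open Classical in
/-- The Iverson bracket: the truth value of a proposition as an element of a semiring. -/
noncomputable def iverson {K : Type*} [Zero K] [One K] (p : Prop) : K :=
  if p then 1 else 0

section iverson

variable {K : Type*} [CommSemiring K] {p q : Prop}

theorem iverson_of (h : p) : (iverson p : K) = 1 := if_pos h

theorem iverson_of_not (h : ¬p) : (iverson p : K) = 0 := if_neg h

theorem iverson_or_of_disjoint (h : ¬(p ∧ q)) : (iverson (p ∨ q) : K) = iverson p + iverson q := by
  by_cases hp : p <;> by_cases hq : q <;> simp_all [iverson]

theorem prod_iverson {ι : Type*} (s : Finset ι) (p : ι → Prop) :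
    ∏ i ∈ s, (iverson (p i) : K) = iverson (∀ i ∈ s, p i) := by
  classical
  simp only [iverson, prod_ite_zero, prod_const_one]
  congr

theorem sum_iverson_mul {ι : Type*} {s : Finset ι} {p : ι → Prop} {i : ι} (hi : i ∈ s)
    (h : ∀ j ∈ s, p j ↔ j = i) (f : ι → K) :
    ∑ j ∈ s, iverson (p j) * f j = f i := by
  rw [sum_eq_single_of_mem i hi fun j hj hne => ?_, iverson_of ((h i hi).2 rfl), one_mul]
  rw [iverson_of_not fun hp => hne ((h j hj).1 hp), zero_mul]

end iverson

theorem extend_snoc {α : Type*} {m : ℕ} (G : Fin m → α) (T : α) (γ : ℕ → α) :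
    Function.extend Fin.val (Fin.snoc G T : Fin (m + 1) → α) γ =
      Function.update (Function.extend Fin.val G γ) m T := by
  ext1 X
  by_cases hX : X < m + 1
  · lift X to Fin (m + 1) using hX
    rw [Fin.val_injective.extend_apply]
    induction X using Fin.lastCases with
    | last => simp [Fin.snoc_last]
    | cast i => simp [i.is_lt.ne, Fin.val_injective.extend_apply]
  · rw [Function.update_of_ne (by omega), Function.extend_apply' _ _ _ (by grind),
      Function.extend_apply' _ _ _ (by grind)]

/-- A quantity depending on a nested word and an assignment is expressible with first-order
variables in `V` and second-order variables in `W` if it is the semantics of a formula in these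
variables, as long as the variables in `V` are interpreted by positions of the word. -/
def Expressible {K Δ : Type} [CommSemiring K] (V W : Finset ℕ)
    (f : NestedWord Δ → (ℕ → ℕ) → (ℕ → Finset ℕ) → K) : Prop :=
  ∃ φ : WMSO K Δ, φ.freeF ⊆ V ∧ φ.freeS ⊆ W ∧ ∀ nw γ₁ γ₂,
    (∀ x ∈ V, γ₁ x ∈ Icc 1 nw.len) → φ.sem nw γ₁ γ₂ = f nw γ₁ γ₂

namespace Expressible

variable {K Δ : Type} [CommSemiring K] {V V' W W' : Finset ℕ} {x y X : ℕ}
  {f g : NestedWord Δ → (ℕ → ℕ) → (ℕ → Finset ℕ) → K}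

theorem nwDefinable {S : NestedWord Δ → K} (h : Expressible ∅ ∅ fun nw _ _ => S nw) :
    NWDefinable (fun _ => True) S := by
  obtain ⟨φ, hF, hS, hφ⟩ := h
  exact ⟨φ, trivial, ⟨subset_empty.1 hF, subset_empty.1 hS⟩, fun nw γ₁ γ₂ =>
    hφ nw γ₁ γ₂ (by simp)⟩

theorem congr (hf : Expressible V W f)
    (h : ∀ nw γ₁ γ₂, (∀ x ∈ V, γ₁ x ∈ Icc 1 nw.len) → f nw γ₁ γ₂ = g nw γ₁ γ₂) :
    Expressible V W g := by
  obtain ⟨φ, hF, hS, hφ⟩ := hf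
  exact ⟨φ, hF, hS, fun nw γ₁ γ₂ hV => (hφ nw γ₁ γ₂ hV).trans (h nw γ₁ γ₂ hV)⟩

theorem const (c : K) : Expressible V W fun (_ : NestedWord Δ) _ _ => c :=
  ⟨.const c, by simp [WMSO.freeF], by simp [WMSO.freeS], fun _ _ _ _ => rfl⟩

theorem letter_eq (a : Δ) (hx : x ∈ V) :
    Expressible V W fun nw γ₁ _ => (iverson (nw.letter (γ₁ x) = a) : K) :=
  ⟨.lab a x, by simpa [WMSO.freeF], by simp [WMSO.freeS], fun _ _ _ _ => rfl⟩

theorem le (hx : x ∈ V) (hy : y ∈ V) :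
    Expressible V W fun (_ : NestedWord Δ) γ₁ _ => (iverson (γ₁ x ≤ γ₁ y) : K) :=
  ⟨.lev x y, by simp [WMSO.freeF, insert_subset_iff, hx, hy], by simp [WMSO.freeS],
    fun _ _ _ _ => by simp [WMSO.sem, iverson]⟩

theorem lt (hx : x ∈ V) (hy : y ∈ V) :
    Expressible V W fun (_ : NestedWord Δ) γ₁ _ => (iverson (γ₁ x < γ₁ y) : K) :=
  ⟨.nle y x, by simp [WMSO.freeF, insert_subset_iff, hx, hy], by simp [WMSO.freeS],
    fun _ _ _ _ => by simp only [WMSO.sem, iverson, ← not_le, ite_not]⟩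

theorem rel (hx : x ∈ V) (hy : y ∈ V) :
    Expressible V W fun (nw : NestedWord Δ) γ₁ _ => (iverson (nw.rel (γ₁ x) (γ₁ y)) : K) :=
  ⟨.nuv x y, by simp [WMSO.freeF, insert_subset_iff, hx, hy], by simp [WMSO.freeS],
    fun _ _ _ _ => rfl⟩

theorem not_rel (hx : x ∈ V) (hy : y ∈ V) :
    Expressible V W fun (nw : NestedWord Δ) γ₁ _ => (iverson (¬nw.rel (γ₁ x) (γ₁ y)) : K) :=
  ⟨.nnu x y, by simp [WMSO.freeF, insert_subset_iff, hx, hy], by simp [WMSO.freeS],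
    fun _ _ _ _ => by simp [WMSO.sem, iverson]⟩

theorem mem (hx : x ∈ V) (hX : X ∈ W) :
    Expressible V W fun (_ : NestedWord Δ) γ₁ γ₂ => (iverson (γ₁ x ∈ γ₂ X) : K) :=
  ⟨.mem x X, by simpa [WMSO.freeF], by simpa [WMSO.freeS],
    fun _ _ _ _ => by simp [WMSO.sem, iverson]⟩

theorem not_mem (hx : x ∈ V) (hX : X ∈ W) :
    Expressible V W fun (_ : NestedWord Δ) γ₁ γ₂ => (iverson (γ₁ x ∉ γ₂ X) : K) :=
  ⟨.nmem x X, by simpa [WMSO.freeF], by simpa [WMSO.freeS],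
    fun _ _ _ _ => by simp [WMSO.sem, iverson]⟩

theorem add (hf : Expressible V W f) (hg : Expressible V W g) :
    Expressible V W fun nw γ₁ γ₂ => f nw γ₁ γ₂ + g nw γ₁ γ₂ := by
  obtain ⟨φ, hφF, hφS, hφ⟩ := hf
  obtain ⟨ψ, hψF, hψS, hψ⟩ := hg
  exact ⟨φ.or ψ, union_subset hφF hψF, union_subset hφS hψS, fun nw γ₁ γ₂ hV =>
    congrArg₂ (· + ·) (hφ nw γ₁ γ₂ hV) (hψ nw γ₁ γ₂ hV)⟩

theorem mul (hf : Expressible V W f) (hg : Expressible V W g) :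
    Expressible V W fun nw γ₁ γ₂ => f nw γ₁ γ₂ * g nw γ₁ γ₂ := by
  obtain ⟨φ, hφF, hφS, hφ⟩ := hf
  obtain ⟨ψ, hψF, hψS, hψ⟩ := hg
  exact ⟨φ.and ψ, union_subset hφF hψF, union_subset hφS hψS, fun nw γ₁ γ₂ hV =>
    congrArg₂ (· * ·) (hφ nw γ₁ γ₂ hV) (hψ nw γ₁ γ₂ hV)⟩

theorem sum {ι : Type*} (s : Finset ι) {f : ι → NestedWord Δ → (ℕ → ℕ) → (ℕ → Finset ℕ) → K}
    (hf : ∀ i, Expressible V W (f i)) :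
    Expressible V W fun nw γ₁ γ₂ => ∑ i ∈ s, f i nw γ₁ γ₂ := by
  induction s using Finset.cons_induction with
  | empty => exact .const 0
  | cons i s _ ih => simpa only [sum_cons] using (hf i).add ih

theorem prod {ι : Type*} (s : Finset ι) {f : ι → NestedWord Δ → (ℕ → ℕ) → (ℕ → Finset ℕ) → K}
    (hf : ∀ i, Expressible V W (f i)) :
    Expressible V W fun nw γ₁ γ₂ => ∏ i ∈ s, f i nw γ₁ γ₂ := by
  induction s using Finset.cons_induction with
  | empty => exact .const 1
  | cons i s _ ih => simpa only [prod_cons] using (hf i).mul ih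

theorem sum_fo (x : ℕ) (hf : Expressible (insert x V) W f) :
    Expressible V W fun nw γ₁ γ₂ => ∑ i ∈ Icc 1 nw.len, f nw (Function.update γ₁ x i) γ₂ := by
  obtain ⟨φ, hF, hS, hφ⟩ := hf
  refine ⟨φ.exF x, subset_insert_iff.1 hF, hS, fun nw γ₁ γ₂ hV =>
    sum_congr rfl fun i hi => hφ _ _ _ fun y hy => ?_⟩
  grind

theorem prod_fo (x : ℕ) (hf : Expressible (insert x V) W f) :
    Expressible V W fun nw γ₁ γ₂ => ∏ i ∈ Icc 1 nw.len, f nw (Function.update γ₁ x i) γ₂ := by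
  obtain ⟨φ, hF, hS, hφ⟩ := hf
  refine ⟨φ.alF x, subset_insert_iff.1 hF, hS, fun nw γ₁ γ₂ hV =>
    prod_congr rfl fun i hi => hφ _ _ _ fun y hy => ?_⟩
  grind

theorem sum_so (X : ℕ) (hf : Expressible V (insert X W) f) :
    Expressible V W fun nw γ₁ γ₂ =>
      ∑ T ∈ (Icc 1 nw.len).powerset, f nw γ₁ (Function.update γ₂ X T) := by
  obtain ⟨φ, hF, hS, hφ⟩ := hf
  exact ⟨φ.exS X, hF, subset_insert_iff.1 hS, fun nw γ₁ γ₂ hV =>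
    sum_congr rfl fun T _ => hφ _ _ _ hV⟩

theorem sum_so_fin {m : ℕ} (hf : Expressible V (range m) f) :
    Expressible V ∅ fun nw γ₁ γ₂ =>
      ∑ G ∈ Fintype.piFinset fun _ : Fin m => (Icc 1 nw.len).powerset,
        f nw γ₁ (Function.extend Fin.val G γ₂) := by
  induction m generalizing f with
  | zero =>
    refine hf.congr fun nw γ₁ γ₂ _ => ?_
    have extend_eq (G : Fin 0 → Finset ℕ) : Function.extend Fin.val G γ₂ = γ₂ :=
      funext fun X => Function.extend_apply' _ _ _ (by simp)
    simp [extend_eq]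
  | succ m ih =>
    rw [range_add_one] at hf
    refine (ih (hf.sum_so m)).congr fun nw γ₁ γ₂ _ => ?_
    rw [← sum_product']
    refine sum_nbij' (fun p => Fin.snoc p.1 p.2) (fun G => (Fin.init G, G (Fin.last m)))
      (fun p hp => ?_) (fun G hG => ?_) (fun p _ => ?_) (fun G _ => ?_) (fun p _ => ?_)
    · simpa [Fin.forall_fin_succ'] using hp
    · simpa [Fin.forall_fin_succ', Fin.init] using hG
    · simp
    · simp
    · rw [extend_snoc]

theorem sum_so_family {Q : Type*} [Fintype Q] [DecidableEq Q] {m : ℕ} (e : Q ≃ Fin m)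
    {F : NestedWord Δ → (ℕ → ℕ) → (Q → Finset ℕ) → K}
    (hF : Expressible V (range m) fun nw γ₁ γ₂ => F nw γ₁ fun q => γ₂ (e q)) :
    Expressible V ∅ fun nw γ₁ _ =>
      ∑ G ∈ Fintype.piFinset fun _ : Q => (Icc 1 nw.len).powerset, F nw γ₁ G := by
  refine hF.sum_so_fin.congr fun nw γ₁ γ₂ _ => ?_
  refine sum_equiv (e.arrowCongr (.refl _)).symm (fun G => ?_) fun G _ => ?_
  · simp [e.forall_congr_left]
  · simp only [Fin.val_injective.extend_apply]
    rfl

theorem eq_one (hx : x ∈ V) :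
    Expressible V W fun (_ : NestedWord Δ) γ₁ _ => (iverson (γ₁ x = 1) : K) := by
  refine ((le (mem_insert_of_mem hx) (mem_insert_self (x + 1) V)).prod_fo (x + 1)).congr
    fun nw γ₁ _ h => ?_
  have hx₁ := mem_Icc.1 (h x hx)
  have least_iff : (∀ i ∈ Icc 1 nw.len, γ₁ x ≤ i) ↔ γ₁ x = 1 :=
    ⟨fun h => by have := h 1 (mem_Icc.2 (by omega)); omega, fun h i hi => h ▸ (mem_Icc.1 hi).1⟩
  simpa [prod_iverson] using congrArg iverson (propext least_iff)

theorem eq_len (hx : x ∈ V) :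
    Expressible V W fun (nw : NestedWord Δ) γ₁ _ => (iverson (γ₁ x = nw.len) : K) := by
  refine ((le (mem_insert_self (x + 1) V) (mem_insert_of_mem hx)).prod_fo (x + 1)).congr
    fun nw γ₁ _ h => ?_
  have hx₁ := mem_Icc.1 (h x hx)
  have greatest_iff : (∀ i ∈ Icc 1 nw.len, i ≤ γ₁ x) ↔ γ₁ x = nw.len :=
    ⟨fun h => by have := h nw.len (mem_Icc.2 (by omega)); omega,
      fun h i hi => h ▸ (mem_Icc.1 hi).2⟩
  simpa [prod_iverson] using congrArg iverson (propext greatest_iff)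

theorem succ_eq (hx : x ∈ V) (hy : y ∈ V) :
    Expressible V W fun (_ : NestedWord Δ) γ₁ _ => (iverson (γ₁ x + 1 = γ₁ y) : K) := by
  have hxz := mem_insert_of_mem (b := x + y + 1) hx
  have hyz := mem_insert_of_mem (b := x + y + 1) hy
  have hz := mem_insert_self (x + y + 1) V
  refine ((lt hx hy).mul (((le hz hxz).add (le hyz hz)).prod_fo (x + y + 1))).congr
    fun nw γ₁ _ h => ?_
  have hx₁ := mem_Icc.1 (h x hx)
  have hy₁ := mem_Icc.1 (h y hy)
  simp only [Function.update_self, Function.update_of_ne (show x ≠ x + y + 1 by omega),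
    Function.update_of_ne (show y ≠ x + y + 1 by omega)]
  by_cases hlt : γ₁ x < γ₁ y
  · have covers_iff : (∀ i ∈ Icc 1 nw.len, i ≤ γ₁ x ∨ γ₁ y ≤ i) ↔ γ₁ x + 1 = γ₁ y :=
      ⟨fun h => by have := h (γ₁ x + 1) (mem_Icc.2 (by omega)); omega, fun h i _ => by omega⟩
    rw [iverson_of hlt, one_mul, ← covers_iff, ← prod_iverson]
    exact prod_congr rfl fun i _ => (iverson_or_of_disjoint (by omega)).symm
  · rw [iverson_of_not hlt, zero_mul, iverson_of_not (by omega)]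

theorem pred {c : K} {g : NestedWord Δ → ℕ → (ℕ → Finset ℕ) → K}
    (hg : ∀ {V y}, y ∈ V → Expressible V W fun nw γ₁ γ₂ => g nw (γ₁ y) γ₂) (hx : x ∈ V) :
    Expressible V W fun nw γ₁ γ₂ => if γ₁ x = 1 then c else g nw (γ₁ x - 1) γ₂ := by
  have hxy := mem_insert_of_mem (b := x + 1) hx
  have hy := mem_insert_self (x + 1) V
  refine (((eq_one hx).mul (.const c)).add
    (((succ_eq hy hxy).mul (hg hy)).sum_fo (x + 1))).congr fun nw γ₁ γ₂ h => ?_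
  have hx₁ := mem_Icc.1 (h x hx)
  simp only [Function.update_self, Function.update_of_ne (Nat.lt_succ_self x).ne]
  split_ifs with hone
  · rw [iverson_of hone, one_mul, sum_eq_zero fun i hi => ?_, add_zero]
    rw [iverson_of_not (by have := mem_Icc.1 hi; omega), zero_mul]
  · rw [iverson_of_not hone, zero_mul, zero_add]
    exact sum_iverson_mul (i := γ₁ x - 1) (mem_Icc.2 (by omega))
      (fun j _ => by omega) fun j => g nw j γ₂

end Expressible

/-! ### Coding runs by formulae -/

/-- A run with initial state `q₀` is coded by the family `G` of sets, where `G q` collects the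
positions at which it is in the state `q`: this is the predicate that the coded run is in the
state `q` at position `k`. If `k ≠ 0` lies in no or in several sets, then no state qualifies. -/
def StateAt {Q : Type*} (q₀ : Q) (G : Q → Finset ℕ) (k : ℕ) (q : Q) : Prop :=
  if k = 0 then q = q₀ else ∀ p, k ∈ G p ↔ p = q

theorem stateAt_filter_iff {Q : Type*} [DecidableEq Q] (ρ : ℕ → Q) {n k : ℕ} (hk : k ≤ n)
    (q : Q) : StateAt (ρ 0) (fun p => {i ∈ Icc 1 n | ρ i = p}) k q ↔ q = ρ k := by
  obtain rfl | hk₀ := eq_or_ne k 0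
  · simp [StateAt]
  · have hkI : k ∈ Icc 1 n := mem_Icc.2 (by omega)
    simp only [StateAt, hk₀, if_false, mem_filter, hkI, true_and]
    exact ⟨fun h => ((h _).1 rfl).symm, fun h p => h ▸ eq_comm⟩

namespace Expressible

variable {K Δ Q : Type} [CommSemiring K] [Finite Q] {V W : Finset ℕ} {x : ℕ} {e : Q → ℕ}

theorem mem_iff_eq (he : ∀ p, e p ∈ W) (hx : x ∈ V) (q : Q) :
    Expressible V W fun (_ : NestedWord Δ) γ₁ γ₂ =>
      (iverson (∀ p, γ₁ x ∈ γ₂ (e p) ↔ p = q) : K) := by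
  cases nonempty_fintype Q
  have mem_iff (p : Q) : Expressible V W fun (_ : NestedWord Δ) γ₁ γ₂ =>
      (iverson (γ₁ x ∈ γ₂ (e p) ↔ p = q) : K) := by
    obtain rfl | hpq := eq_or_ne p q
    · simpa only [iff_true] using mem hx (he p)
    · simpa only [hpq, iff_false] using not_mem hx (he p)
  simpa only [prod_iverson, Finset.mem_univ, true_imp_iff] using prod univ mem_iff

theorem stateAt (he : ∀ p, e p ∈ W) (hx : x ∈ V) (q₀ q : Q) :
    Expressible V W fun (_ : NestedWord Δ) γ₁ γ₂ =>
      (iverson (StateAt q₀ (fun p => γ₂ (e p)) (γ₁ x) q) : K) := by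
  refine (mem_iff_eq he hx q).congr fun nw γ₁ γ₂ h => ?_
  rw [StateAt, if_neg (by have := mem_Icc.1 (h x hx); omega)]

theorem stateAt_pred (he : ∀ p, e p ∈ W) (hx : x ∈ V) (q₀ q : Q) :
    Expressible V W fun (_ : NestedWord Δ) γ₁ γ₂ =>
      (iverson (StateAt q₀ (fun p => γ₂ (e p)) (γ₁ x - 1) q) : K) := by
  refine (pred (c := iverson (q = q₀)) (g := fun _ k γ₂ => iverson (∀ p, k ∈ γ₂ (e p) ↔ p = q))
    (fun hy => mem_iff_eq he hy q) hx).congr fun nw γ₁ γ₂ h => ?_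
  have hx₁ := mem_Icc.1 (h x hx)
  have pred_eq_zero : γ₁ x - 1 = 0 ↔ γ₁ x = 1 := by omega
  simp only [StateAt, pred_eq_zero]
  split_ifs <;> rfl

end Expressible

namespace WNWA

variable {K Δ : Type} [CommSemiring K] (A : WNWA K Δ) {nw : NestedWord Δ} {ρ : ℕ → A.Q} {i j : ℕ}

theorem posWeight_eq_sum :
    A.posWeight nw ρ j =
      ∑ i ∈ Icc 1 nw.len, iverson (nw.rel j i) * A.δcall (ρ (j - 1)) (nw.letter j) (ρ j) +
      ∑ i ∈ Icc 1 nw.len,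
        iverson (nw.rel i j) * A.δret (ρ (j - 1)) (ρ (i - 1)) (nw.letter j) (ρ j) +
      (∏ i ∈ Icc 1 nw.len, iverson (¬nw.rel j i) * iverson (¬nw.rel i j)) *
        A.δint (ρ (j - 1)) (nw.letter j) (ρ j) := by
  by_cases hc : nw.IsCall j
  · obtain ⟨i, hi⟩ := hc
    have := rel_bounds hi
    have hiI : i ∈ Icc 1 nw.len := mem_Icc.2 (by omega)
    have not_return (i') : ¬nw.rel i' j := fun h => not_isCall_of_rel h ⟨i, hi⟩
    rw [A.posWeight_of_isCall ⟨i, hi⟩, prod_eq_zero hiI (by simp [hi, iverson_of_not]),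
      sum_iverson_mul hiI fun k _ => ⟨fun hk => rel_right_unique hk hi, fun e => e ▸ hi⟩]
    simp [not_return, iverson_of_not]
  have not_call (i) : ¬nw.rel j i := fun h => hc ⟨i, h⟩
  by_cases hr : nw.IsReturn j
  · obtain ⟨i, hi⟩ := hr
    have := rel_bounds hi
    have hiI : i ∈ Icc 1 nw.len := mem_Icc.2 (by omega)
    rw [A.posWeight_of_rel hi, prod_eq_zero hiI (by simp [hi, iverson_of_not]),
      sum_iverson_mul hiI fun k _ => ⟨fun hk => rel_left_unique hk hi, fun e => e ▸ hi⟩]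
    simp [not_call, iverson_of_not]
  · have not_return (i) : ¬nw.rel i j := fun h => hr ⟨i, h⟩
    rw [A.posWeight_of_not_isCall_of_not_isReturn hc hr]
    simp [not_call, not_return, iverson_of, iverson_of_not]

variable (q₀ : A.Q) (G : A.Q → Finset ℕ)

/-- The weight contributed by position `j` to the run coded by `q₀` and `G`, written with the
operations of the logic only. -/
noncomputable def codedPosWeight [Fintype Δ] (nw : NestedWord Δ) (j : ℕ) : K :=
  ∑ p, iverson (StateAt q₀ G (j - 1) p) * ∑ q, iverson (StateAt q₀ G j q) *
    ∑ a, iverson (nw.letter j = a) *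
      (∑ i ∈ Icc 1 nw.len, iverson (nw.rel j i) * A.δcall p a q +
      ∑ i ∈ Icc 1 nw.len, iverson (nw.rel i j) *
        ∑ p', iverson (StateAt q₀ G (i - 1) p') * A.δret p p' a q +
      (∏ i ∈ Icc 1 nw.len, iverson (¬nw.rel j i) * iverson (¬nw.rel i j)) * A.δint p a q)

/-- The weight of the run coded by `q₀` and `G`, including its initial and final weights. -/
noncomputable def codedWeight [Fintype Δ] (nw : NestedWord Δ) : K :=
  A.ι q₀ * (∏ j ∈ Icc 1 nw.len, A.codedPosWeight q₀ G nw j) *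
    ∑ q, iverson (StateAt q₀ G nw.len q) * A.κ q

variable {q₀ G} [Fintype Δ]

theorem codedPosWeight_eq_posWeight (h : ∀ k ≤ nw.len, ∀ q, StateAt q₀ G k q ↔ q = ρ k)
    (hj : j ≤ nw.len) : A.codedPosWeight q₀ G nw j = A.posWeight nw ρ j := by
  have select {k : ℕ} (hk : k ≤ nw.len) (f : A.Q → K) :
      ∑ q, iverson (StateAt q₀ G k q) * f q = f (ρ k) :=
    sum_iverson_mul (mem_univ _) (fun q _ => h k hk q) f
  rw [codedPosWeight, select (by omega), select hj, posWeight_eq_sum,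
    sum_iverson_mul (mem_univ (nw.letter j)) fun _ _ => eq_comm]
  congr 2
  exact sum_congr rfl fun i hi => by rw [select (by have := mem_Icc.1 hi; omega)]

theorem codedPosWeight_eq_zero (h : ∀ q, ¬StateAt q₀ G j q) : A.codedPosWeight q₀ G nw j = 0 := by
  simp [codedPosWeight, iverson_of_not (h _)]

theorem codedWeight_eq_runWeight (h : ∀ k ≤ nw.len, ∀ q, StateAt q₀ G k q ↔ q = ρ k) :
    A.codedWeight q₀ G nw = A.ι (ρ 0) * A.runWeight nw ρ * A.κ (ρ nw.len) := by
  have start_eq : q₀ = ρ 0 := (h 0 nw.len.zero_le q₀).1 rfl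
  rw [codedWeight, sum_iverson_mul (mem_univ _) fun q _ => h _ le_rfl q, start_eq, runWeight,
    prod_congr rfl fun j hj => ?_]
  exact codedPosWeight_eq_posWeight A (by rwa [← start_eq]) (mem_Icc.1 hj).2

theorem exists_run_of_codedWeight_ne_zero (h : A.codedWeight q₀ G nw ≠ 0) :
    ∃ r : Fin (nw.len + 1) → A.Q, r 0 = q₀ ∧
      ∀ k ∈ Icc 1 nw.len, ∀ q, k ∈ G q ↔ clampFun r k = q := by
  have exists_state (k) (hk : k ∈ Icc 1 nw.len) : ∃ q, ∀ p, k ∈ G p ↔ p = q := by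
    by_contra! hno
    refine h ?_
    rw [codedWeight, prod_eq_zero hk (A.codedPosWeight_eq_zero fun q hq => ?_), mul_zero, zero_mul]
    obtain ⟨p, hp⟩ := hno q
    rw [StateAt, if_neg (by have := mem_Icc.1 hk; omega)] at hq
    have := hq p
    tauto
  have : Nonempty A.Q := ⟨q₀⟩
  choose! ρ hρ using exists_state
  refine ⟨fun k => Function.update ρ 0 q₀ k, by simp, fun k hk q => ?_⟩
  obtain ⟨hk₁, hk₂⟩ := mem_Icc.1 hk
  rw [clampFun_val _ (⟨k, by omega⟩ : Fin (nw.len + 1)), Function.update_of_ne (by grind), hρ k hk,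
    eq_comm]

open Classical in
theorem behavior_eq_sum_codedWeight :
    A.behavior nw = ∑ q₀, ∑ G ∈ Fintype.piFinset fun _ : A.Q => (Icc 1 nw.len).powerset,
      A.codedWeight q₀ G nw := by
  rw [← sum_product']
  refine sum_of_injOn (fun r => (r 0, fun q => {k ∈ Icc 1 nw.len | clampFun r k = q}))
    (fun r _ r' _ h => ?_) (fun r _ => ?_) (fun ⟨q₀, G⟩ hp hnot => ?_) fun r _ => ?_
  · obtain ⟨h₀, hG⟩ := Prod.mk.inj h
    ext1 k
    obtain rfl | hk := eq_or_ne k 0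
    · exact h₀
    have hkI : (k : ℕ) ∈ Icc 1 nw.len := mem_Icc.2 (by grind)
    have := congrArg ((k : ℕ) ∈ · ) (congrFun hG (r k))
    simpa [hkI, clampFun_val, eq_comm] using this
  · simp only [coe_product, coe_univ, Set.mem_prod, Set.mem_univ, true_and, SetLike.mem_coe,
      Fintype.mem_piFinset, mem_powerset, filter_subset, implies_true]
  · by_contra hne
    obtain ⟨r, rfl, hr⟩ := A.exists_run_of_codedWeight_ne_zero hne
    refine hnot ⟨r, by simp, Prod.ext rfl (funext fun q => ?_)⟩
    have hGq : G q ⊆ Icc 1 nw.len := by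
      simpa using Fintype.mem_piFinset.1 (mem_product.1 hp).2 q
    ext k
    exact mem_filter.trans ⟨fun hk => (hr k hk.1 q).2 hk.2,
      fun hk => ⟨hGq hk, (hr k (hGq hk) q).1 hk⟩⟩
  · rw [← clampFun_val r 0, ← clampFun_val r (Fin.last _)]
    exact (A.codedWeight_eq_runWeight fun k hk => stateAt_filter_iff (clampFun r) hk).symm

open Expressible

variable {V W : Finset ℕ} {x : ℕ} {e : A.Q → ℕ}

theorem expressible_codedPosWeight (he : ∀ p, e p ∈ W) (q₀ : A.Q) (hx : x ∈ V) :
    Expressible V W fun (nw : NestedWord Δ) γ₁ γ₂ =>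
      A.codedPosWeight q₀ (fun p => γ₂ (e p)) nw (γ₁ x) := by
  have hxy := mem_insert_of_mem (b := x + 1) hx
  have hy := mem_insert_self (x + 1) V
  have call_weight (p a q) :=
    ((rel hxy hy).mul (const (Δ := Δ) (W := W) (A.δcall p a q))).sum_fo (x + 1)
  have ret_weight (p a q) := ((rel hy hxy).mul (sum univ fun p' =>
    (stateAt_pred he hy q₀ p').mul (const (Δ := Δ) (A.δret p p' a q)))).sum_fo (x + 1)
  have int_weight (p a q) := (((not_rel hxy hy).mul (not_rel (W := W) hy hxy)).prod_fo
    (x + 1)).mul (const (Δ := Δ) (A.δint p a q))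
  simpa [codedPosWeight] using sum univ fun p => (stateAt_pred he hx q₀ p).mul (sum univ fun q =>
    (stateAt he hx q₀ q).mul (sum univ fun a => (letter_eq a hx).mul
      (((call_weight p a q).add (ret_weight p a q)).add (int_weight p a q))))

theorem expressible_codedWeight (he : ∀ p, e p ∈ W) (q₀ : A.Q) :
    Expressible V W fun (nw : NestedWord Δ) _ γ₂ =>
      A.codedWeight q₀ (fun p => γ₂ (e p)) nw := by
  have hx := mem_insert_self 0 V
  have final_weight := ((eq_len hx).mul (sum univ fun q =>
    (stateAt he hx q₀ q).mul (const (Δ := Δ) (A.κ q)))).sum_fo 0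
  refine (((const (A.ι q₀)).mul ((A.expressible_codedPosWeight he q₀ hx).prod_fo 0)).mul
    final_weight).congr fun nw γ₁ γ₂ _ => ?_
  simp only [Function.update_self]
  rw [codedWeight, sum_iverson_mul (mem_Icc.2 ⟨nw.len_pos, le_rfl⟩) fun _ _ => Iff.rfl]

end WNWA

theorem NWRegular.nwDefinable {K Δ : Type} [CommSemiring K] [Finite Δ] {S : NestedWord Δ → K}
    (hS : NWRegular S) : NWDefinable (fun _ => True) S := by
  classical
  cases nonempty_fintype Δ
  obtain ⟨A, hA⟩ := hS
  obtain ⟨m, ⟨e⟩⟩ := Finite.exists_equiv_fin A.Q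
  have expressible_sum := Expressible.sum univ fun q₀ =>
    Expressible.sum_so_family (F := fun nw _ G => A.codedWeight q₀ G nw) e <|
      A.expressible_codedWeight (Δ := Δ) (V := ∅) (fun p => mem_range.2 (e p).is_lt) q₀
  exact (expressible_sum.congr fun nw _ _ _ =>
    A.behavior_eq_sum_codedWeight.symm.trans (hA nw)).nwDefinable

/-- **Theorem (Mathissen).** Over a locally finite commutative semiring, a nested
word series is regular iff it is `MSO(K)`-definable. -/
theorem regular_iff_MSO_definable_of_locallyFinite
    (K Δ : Type) [CommSemiring K] [Fintype Δ] (h01 : (0 : K) ≠ 1)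
    (hK : LocallyFiniteSemiring K) (S : NestedWord Δ → K) :
    NWRegular S ↔ NWDefinable (fun _ => True) S := by
  refine ⟨NWRegular.nwDefinable, fun hS => ?_⟩
  obtain ⟨F, hF, hSF⟩ := hS.exists_recognizable hK
  obtain rfl : S = fun nw => F nw nw.letter := funext hSF
  exact hF.nwRegular
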